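/- For every cardinal number α ≥ 𝔠, there exists a metrizable topological space X with |X| = α such that: for every set Q with |Q| ≤ α and every pair of quasiorders ≤₁, ≤₂ on Q satisfying (q ≤₁ q' implies q ≤₂ q') for all q, q' ∈ Q, there exists a family {X(q) : q ∈ Q} of clopen subsets of X which are pairwise non-homeomorphic (as subspaces of X) and satisfy: (1) q ≤₁ q' if and only if X(q) is homeomorphic to a clopen subset of X(q'); (2) if q ≤₂ q', then X(q) is homeomorphic to a closed subset of X(q'); and (3) if ¬(q ≤₂ q'), then there exists no injective continuous map from X(q) into X(q'). -/

import Mathlib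

universe u

open Cardinal

/-- `A` is homeomorphic to a clopen subset of `B`. -/
def HomeoToClopenSubset (A : Type*) [TopologicalSpace A]
    (B : Type*) [TopologicalSpace B] : Prop :=
  ∃ t : Set B, IsClopen t ∧ Nonempty (A ≃ₜ t)

/-- `A` is homeomorphic to a closed subset of `B`. -/
def HomeoToClosedSubset (A : Type*) [TopologicalSpace A]
    (B : Type*) [TopologicalSpace B] : Prop :=
  ∃ t : Set B, IsClosed t ∧ Nonempty (A ≃ₜ t)

/-- There exists an injective continuous map from `A` into `B`. -/
def ExistsInjCont (A : Type*) [TopologicalSpace A]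
    (B : Type*) [TopologicalSpace B] : Prop :=
  ∃ f : A → B, Continuous f ∧ Function.Injective f

/-- The representation property of the space `X` for a pair of quasiorders. -/
def RepresentsPairs (α : Cardinal.{u}) (X : Type u) [TopologicalSpace X] : Prop :=
  ∀ (Q : Type u) (le1 le2 : Q → Q → Prop), #Q ≤ α →
    (∀ q, le1 q q) → (∀ a b c, le1 a b → le1 b c → le1 a c) →
    (∀ q, le2 q q) → (∀ a b c, le2 a b → le2 b c → le2 a c) →
    (∀ q q', le1 q q' → le2 q q') →
    ∃ Xq : Q → Set X,
      (∀ q, IsClopen (Xq q)) ∧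
      (∀ q q', q ≠ q' → IsEmpty ((Xq q) ≃ₜ (Xq q'))) ∧
      (∀ q q', le1 q q' ↔ HomeoToClopenSubset (Xq q) (Xq q')) ∧
      (∀ q q', le2 q q' → HomeoToClosedSubset (Xq q) (Xq q')) ∧
      (∀ q q', ¬ le2 q q' → ¬ ExistsInjCont (Xq q) (Xq q'))


section Rigid

variable {J : Type*} [LinearOrder J]

open Classical in
/-- ladder -/
noncomputable def ladder (v : J) : ℕ → J :=
  if h : ∃ s : ℕ → J, StrictMono s ∧ IsLUB (Set.range s) v then h.choose else fun _ => v

theorem ladder_spec {v : J} (h : ∃ s : ℕ → J, StrictMono s ∧ IsLUB (Set.range s) v) :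
    StrictMono (ladder v) ∧ IsLUB (Set.range (ladder v)) v := by
  unfold ladder
  rw [dif_pos h]
  exact h.choose_spec

theorem ladder_spec' {v : J} (h : ladder v 0 ≠ ladder v 1) :
    IsLUB (Set.range (ladder v)) v := by
  by_cases h' : ∃ s : ℕ → J, StrictMono s ∧ IsLUB (Set.range s) v
  · exact (ladder_spec h').2
  · exfalso
    apply h
    unfold ladder
    rw [dif_neg h']

theorem rigid_order [WellFoundedLT J] [OrderTop J] (h : J → J) (hm : StrictMono h)
    (hl : ∀ v n, h (ladder v n) = ladder (h v) n) (x : J) : h x = x := by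
  by_contra hne
  have hge : ∀ y, y ≤ h y := fun y => hm.le_apply
  have hx : x < h x := lt_of_le_of_ne (hge x) (Ne.symm hne)
  let s : ℕ → J := fun n => h^[n] x
  have hs1 : ∀ n, s (n+1) = h (s n) := fun n => Function.iterate_succ_apply' h n x
  have hs : StrictMono s := by
    apply strictMono_nat_of_lt_succ
    intro n
    induction n with
    | zero => exact hx
    | succ n ih => rw [hs1 (n+1)]; nth_rewrite 1 [hs1 n]; exact hm ih
  obtain ⟨l, hl1, hl2⟩ := WellFounded.has_min (wellFounded_lt (α := J))
    (upperBounds (Set.range s)) ⟨⊤, fun _ _ => le_top⟩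
  have hlub : IsLUB (Set.range s) l := ⟨hl1, fun y hy => not_lt.1 (hl2 y hy)⟩
  obtain ⟨hL1, hL2⟩ := ladder_spec ⟨s, hs, hlub⟩
  have hL3 : IsLUB (Set.range (ladder (h l))) (h l) := by
    apply ladder_spec'
    rw [← hl, ← hl]
    exact (hm (hL1 (by norm_num))).ne
  have hLlt : ∀ n, ladder l n < l := fun n =>
    lt_of_lt_of_le (hL1 (Nat.lt_succ_self n)) (hL2.1 ⟨n+1, rfl⟩)
  have hslt : ∀ n, s n < l := fun n =>
    lt_of_lt_of_le (hs (Nat.lt_succ_self n)) (hlub.1 ⟨n+1, rfl⟩)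
  have hle : h l ≤ l := by
    apply hL3.2
    rintro _ ⟨n, rfl⟩
    rw [← hl]
    obtain ⟨_, ⟨k, rfl⟩, hk⟩ := (lt_isLUB_iff hlub).1 (hLlt n)
    exact ((hm hk).le.trans_eq (hs1 k).symm).trans (hslt _).le
  have heq : h l = l := le_antisymm hle (hge l)
  obtain ⟨_, ⟨n, rfl⟩, hn⟩ := (lt_isLUB_iff hL2).1 (hslt 0)
  have hfix : h (ladder l n) = ladder l n := by rw [hl, heq]
  have hall : ∀ k, s k < ladder l n := by
    intro k
    induction k with
    | zero => exact hn
    | succ k ih => rw [hs1, ← hfix]; exact hm ih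
  have : l ≤ ladder l n := hlub.2 (by rintro _ ⟨k, rfl⟩; exact (hall k).le)
  exact absurd (hLlt n) (not_lt.2 this)

/-- Vertices of the rigid graphs. -/
abbrev GV (J : Type*) := (J × ℕ) ⊕ Fin 10

/-- extra edges downwards -/
def GE (v : J) (m : ℕ) (u : J) : Prop := (m = 2 ∧ u < v) ∨ ∃ n, m = n + 3 ∧ u = ladder v n

/-- edges to constants -/
def GS (i : J) (b : Bool) (j : J) (m : ℕ) (c : Fin 10) : Prop :=
  (m = 0 ∧ (c = 0 ∨ c = 1 ∨ c = 2)) ∨ (m ≠ 0 ∧ c = 5) ∨ (m = 1 ∧ c = 3) ∨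
    (m = 0 ∧ j = i ∧ (c = 3 ∨ (b = true ∧ c = 4)))

/-- The graph with mark `i` and flag `b`. -/
def GA (i : J) (b : Bool) : GV J → GV J → Prop
  | Sum.inl x, Sum.inl y => (x.1 = y.1 ∧ (x.2 = y.2 + 1 ∨ y.2 = x.2 + 1)) ∨
      (y.2 = 0 ∧ GE x.1 x.2 y.1) ∨ (x.2 = 0 ∧ GE y.1 y.2 x.1)
  | Sum.inl x, Sum.inr c => GS i b x.1 x.2 c
  | Sum.inr c, Sum.inl x => GS i b x.1 x.2 c
  | Sum.inr c, Sum.inr d => c ≠ d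

theorem GA_symm (i : J) (b : Bool) (u v : GV J) (h : GA i b u v) : GA i b v u := by
  rcases u with ⟨j, m⟩ | c <;> rcases v with ⟨k, n⟩ | d <;> simp only [GA] at *
  · rcases h with ⟨h1, h2⟩ | h | h
    · exact Or.inl ⟨h1.symm, h2.symm⟩
    · exact Or.inr (Or.inr h)
    · exact Or.inr (Or.inl h)
  · exact h
  · exact h
  · exact h.symm

theorem GA_irrefl (i : J) (b : Bool) (u : GV J) : ¬ GA i b u u := by
  rcases u with ⟨j, m⟩ | c <;> simp only [GA, GE] <;> grind

theorem GA_mono (i : J) (u v : GV J) (h : GA i false u v) (b : Bool) : GA i b u v := by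
  rcases u with ⟨j, m⟩ | c <;> rcases v with ⟨k, n⟩ | d <;> simp only [GA, GS] at * <;> grind

/-- colouring -/
def Gcol : GV J → ℕ
  | Sum.inl x => if x.2 = 0 then 6 else 7 + x.2 % 2
  | Sum.inr c => c.1

theorem Gcol_ne (i : J) (b : Bool) (u v : GV J) (h : GA i b u v) 
    (hu : ∀ c, u = Sum.inr c → c.1 < 6) (hv : ∀ c, v = Sum.inr c → c.1 < 6) :
    Gcol u ≠ Gcol v := by
  rcases u with ⟨j, m⟩ | c <;> rcases v with ⟨k, n⟩ | d <;> simp only [GA, GE, Gcol] at *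
  · grind
  · have := hv d rfl; grind
  · have := hu c rfl; grind
  · grind

theorem GS_lt {i : J} {b : Bool} {j : J} {m : ℕ} {c : Fin 10} (h : GS i b j m c) : c.1 < 6 := by
  unfold GS at h
  have : c = 0 ∨ c = 1 ∨ c = 2 ∨ c = 3 ∨ c = 4 ∨ c = 5 := by tauto
  rcases this with h | h | h | h | h | h <;> subst h <;> decide

theorem rigid_const {i i' : J} {b b' : Bool} (f : GV J → GV J) 
    (hf : ∀ u v, GA i b u v → GA i' b' (f u) (f v)) (c : Fin 10) :
    ∃ d, f (Sum.inr c) = Sum.inr d := by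
  rcases hc : f (Sum.inr c) with x | d
  swap
  · exact ⟨d, rfl⟩
  exfalso
  have key : ∀ c' d, f (Sum.inr c') = Sum.inr d → d.1 < 6 := by
    intro c' d h
    have hne : c' ≠ c := by rintro rfl; rw [h] at hc; cases hc
    have := hf (Sum.inr c') (Sum.inr c) hne
    rw [h, hc] at this
    exact GS_lt this
  have hcol : ∀ c', Gcol (f (Sum.inr c')) < 9 := by
    intro c'
    rcases hx : f (Sum.inr c') with x | d
    · simp only [Gcol]; split_ifs <;> omega
    · have := key c' d hx; simp only [Gcol]; omega
  let g : Fin 10 → Fin 9 := fun c' => ⟨Gcol (f (Sum.inr c')), hcol c'⟩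
  have hg : Function.Injective g := by
    intro c1 c2 h
    by_contra hne
    have h2 := hf (Sum.inr c1) (Sum.inr c2) hne
    exact Gcol_ne i' b' _ _ h2 (key c1) (key c2) (congrArg Fin.val h)
  have := Fintype.card_le_of_injective g hg
  simp at this

set_option maxHeartbeats 4000000 in
theorem rigid_graph [WellFoundedLT J] [OrderTop J] [Nontrivial J] {i i' : J} {b b' : Bool}
    (f : GV J → GV J) (hinj : Function.Injective f)
    (hf : ∀ u v, GA i b u v → GA i' b' (f u) (f v)) :
    i = i' ∧ (b = true → b' = true) ∧ ∀ x, f (Sum.inl x) = Sum.inl x := by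
  choose p hp using rigid_const f hf
  have hpinj : Function.Injective p := by
    intro c d h
    have : f (Sum.inr c) = f (Sum.inr d) := by rw [hp, hp, h]
    exact Sum.inr_injective (hinj this)
  have hpsurj : Function.Surjective p := Finite.surjective_of_injective hpinj
  have hg : ∀ x, ∃ y, f (Sum.inl x) = Sum.inl y := by
    intro x
    rcases hx : f (Sum.inl x) with y | d
    · exact ⟨y, rfl⟩
    · exfalso
      obtain ⟨c, rfl⟩ := hpsurj d
      rw [← hp] at hx
      cases hinj hx
  choose g hg using hg
  have hginj : Function.Injective g := by
    intro c d h
    have : f (Sum.inl c) = f (Sum.inl d) := by rw [hg, hg, h]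
    exact Sum.inl_injective (hinj this)
  have hS : ∀ j m c, GS i b j m c → GS i' b' (g (j,m)).1 (g (j,m)).2 (p c) := by
    intro j m c h
    have := hf (Sum.inl (j,m)) (Sum.inr c) h
    rw [hg, hp] at this
    exact this
  have hN : ∀ x y, GA i b (Sum.inl x) (Sum.inl y) → GA i' b' (Sum.inl (g x)) (Sum.inl (g y)) := by
    intro x y h
    have := hf _ _ h
    rwa [hg, hg] at this
  have p01 : p 0 ≠ p 1 := fun h => absurd (hpinj h) (by decide)
  have p02 : p 0 ≠ p 2 := fun h => absurd (hpinj h) (by decide)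
  have p12 : p 1 ≠ p 2 := fun h => absurd (hpinj h) (by decide)
  have hlev0 : ∀ j, (g (j,0)).2 = 0 := by
    intro j
    have h0 := hS j 0 0 (by simp [GS])
    have h1 := hS j 0 1 (by simp [GS])
    have h2 := hS j 0 2 (by simp [GS])
    unfold GS at h0 h1 h2
    by_contra hne
    have h0' : p 0 = 5 ∨ p 0 = 3 := by tauto
    have h1' : p 1 = 5 ∨ p 1 = 3 := by tauto
    have h2' : p 2 = 5 ∨ p 2 = 3 := by tauto
    grind
  obtain ⟨j1, j2, hj⟩ := exists_pair_ne J
  have hj0 : ∃ j, (g (j,0)).1 ≠ i' := by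
    by_contra! hall
    have : g (j1,0) = g (j2,0) := Prod.ext ((hall j1).trans (hall j2).symm)
      ((hlev0 j1).trans (hlev0 j2).symm)
    exact hj (congrArg Prod.fst (hginj this))
  have hA : ∀ c : Fin 10, (c = 0 ∨ c = 1 ∨ c = 2) → (p c = 0 ∨ p c = 1 ∨ p c = 2) := by
    obtain ⟨j, hj⟩ := hj0
    intro c hc
    have h0 := hS j 0 c (by simp [GS, hc])
    have := hlev0 j
    have h1 : (g (j, 0)).2 ≠ 1 := by omega
    unfold GS at h0
    tauto
  have hA' : ∀ c : Fin 10, (p c = 0 ∨ p c = 1 ∨ p c = 2) → (c = 0 ∨ c = 1 ∨ c = 2) := by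
    intro c hc
    have h0 := hA 0 (by simp)
    have h1 := hA 1 (by simp)
    have h2 := hA 2 (by simp)
    have : p c = p 0 ∨ p c = p 1 ∨ p c = p 2 := by
      generalize p 0 = x0 at *
      generalize p 1 = x1 at *
      generalize p 2 = x2 at *
      generalize p c = x at *
      clear hA hf hp hpsurj hg hS hN hlev0 hj0 hpinj
      rcases h0 with rfl | rfl | rfl <;> rcases h1 with rfl | rfl | rfl <;> rcases h2 with rfl | rfl | rfl <;> simp_all <;> tauto
    rcases this with h | h | h
    · exact Or.inl (hpinj h)
    · exact Or.inr (Or.inl (hpinj h))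
    · exact Or.inr (Or.inr (hpinj h))
  have h5A : ¬ (p 5 = 0 ∨ p 5 = 1 ∨ p 5 = 2) := fun h => absurd (hA' 5 h) (by decide)
  have h3A : ¬ (p 3 = 0 ∨ p 3 = 1 ∨ p 3 = 2) := fun h => absurd (hA' 3 h) (by decide)
  have h4A : ¬ (p 4 = 0 ∨ p 4 = 1 ∨ p 4 = 2) := fun h => absurd (hA' 4 h) (by decide)
  -- positive levels
  have hpos : ∀ j m, m ≠ 0 → (g (j,m)).2 = 0 → g (j,m) = (i', 0) := by
    intro j m hm h0
    have h := hS j m 5 (by simp [GS, hm])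
    unfold GS at h
    have h1 : (g (j, m)).2 ≠ 1 := by omega
    have : (g (j,m)).1 = i' := by tauto
    exact Prod.ext this h0
  have hj23 : ∃ j, (g (j,2)).2 ≠ 0 ∧ (g (j,3)).2 ≠ 0 := by
    by_contra! hall
    have h1 : ∃ m, g (j1, m) = (i', 0) := by
      by_cases h : (g (j1,2)).2 = 0
      · exact ⟨2, hpos _ _ (by norm_num) h⟩
      · exact ⟨3, hpos _ _ (by norm_num) (hall _ h)⟩
    have h2 : ∃ m, g (j2, m) = (i', 0) := by
      by_cases h : (g (j2,2)).2 = 0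
      · exact ⟨2, hpos _ _ (by norm_num) h⟩
      · exact ⟨3, hpos _ _ (by norm_num) (hall _ h)⟩
    obtain ⟨m1, h1⟩ := h1
    obtain ⟨m2, h2⟩ := h2
    exact hj (congrArg Prod.fst (hginj (h1.trans h2.symm)))
  have hadjpos : ∀ x y : J × ℕ, GA i' b' (Sum.inl x) (Sum.inl y) → x.2 ≠ 0 → y.2 ≠ 0 →
      x.1 = y.1 ∧ (x.2 = y.2 + 1 ∨ y.2 = x.2 + 1) := by
    intro x y h hx hy
    simp only [GA] at h
    tauto
  have h55 : p 5 = 5 := by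
    obtain ⟨j, hj2, hj3⟩ := hj23
    have h := hadjpos _ _ (hN (j,2) (j,3) (by simp [GA])) hj2 hj3
    have a2 := hS j 2 5 (by simp [GS])
    have a3 := hS j 3 5 (by simp [GS])
    unfold GS at a2 a3
    grind
  have hpos' : ∀ j m, m ≠ 0 → (g (j,m)).2 ≠ 0 := by
    intro j m hm h0
    have h := hS j m 5 (by simp [GS, hm])
    rw [h55] at h
    unfold GS at h
    have e1 : (5 : Fin 10) ≠ 3 := by decide
    have e2 : (5 : Fin 10) ≠ 4 := by decide
    have e3 : (5 : Fin 10) ≠ 0 := by decide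
    have e4 : (5 : Fin 10) ≠ 1 := by decide
    have e5 : (5 : Fin 10) ≠ 2 := by decide
    tauto
  have h35 : p 3 ≠ 5 := by rw [← h55]; exact fun h => absurd (hpinj h) (by decide)
  have hlev1' : ∀ j, (g (j,1)).2 = 1 ∧ p 3 = 3 := by
    intro j
    have h := hS j 1 3 (by simp [GS])
    have h' := hpos' j 1 (by norm_num)
    unfold GS at h
    tauto
  have h33 : p 3 = 3 := (hlev1' j1).2
  have hlev1 : ∀ j, (g (j,1)).2 = 1 := fun j => (hlev1' j).1
  let h : J → J := fun j => (g (j,0)).1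
  have hg0 : ∀ j, g (j,0) = (h j, 0) := fun j => Prod.ext rfl (hlev0 j)
  have hg1 : ∀ j, g (j,1) = (h j, 1) := by
    intro j
    refine Prod.ext ?_ (hlev1 j)
    have hh := hN (j,0) (j,1) (by simp [GA])
    rw [hg0] at hh
    have := hlev1 j
    simp only [GA, GE, this] at hh
    simp at hh
    exact hh.symm
  have hgn : ∀ j m, g (j,m) = (h j, m) ∧ g (j,m+1) = (h j, m+1) := by
    intro j m
    induction m with
    | zero => exact ⟨hg0 j, hg1 j⟩
    | succ m ih =>
      refine ⟨ih.2, ?_⟩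
      have hh := hadjpos _ _ (hN (j,m+1) (j,m+1+1) (by simp [GA])) (hpos' _ _ (by omega))
        (hpos' _ _ (by omega))
      rw [ih.2] at hh
      refine Prod.ext hh.1.symm ?_
      rcases hh.2 with h2 | h2
      · exfalso
        have h3 : g (j, m+1+1) = g (j, m) := by
          rw [ih.1]
          refine Prod.ext hh.1.symm ?_
          simp at h2 ⊢
          omega
        have := congrArg Prod.snd (hginj h3)
        simp only at this
        omega
      · exact h2
  have hgn' : ∀ j m, g (j,m) = (h j, m) := fun j m => (hgn j m).1
  have hmono : StrictMono h := by
    intro u v huv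
    have hh := hN (v,2) (u,0) (by simp [GA, GE, huv])
    rw [hgn', hgn'] at hh
    simpa [GA, GE] using hh
  have hlad : ∀ v n, h (ladder v n) = ladder (h v) n := by
    intro v n
    have hh := hN (v,n+3) (ladder v n,0) (by simp [GA, GE])
    rw [hgn', hgn'] at hh
    simpa [GA, GE] using hh
  have hid := rigid_order h hmono hlad
  have hm := hS i 0 3 (by simp [GS])
  rw [hgn', h33, hid] at hm
  have hii : i = i' := by simpa [GS] using hm
  refine ⟨hii, ?_, ?_⟩
  · intro hb
    have hm := hS i 0 4 (by simp [GS, hb])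
    rw [hgn', hid] at hm
    have e : p 4 ≠ 3 := by rw [← h33]; exact fun h => absurd (hpinj h) (by decide)
    unfold GS at hm
    simp only at hm
    tauto
  · rintro ⟨j, m⟩
    rw [hg, hgn', hid]

end Rigid


section PtSpace

open Set Filter Topology

universe v

/-- Points of the graph-like space: vertices and points on arcs. -/
inductive Pt {N : Type v} (r : N → N → Prop) : Type v
  | vx (n : N) : Pt r
  | pt (u w : N) (k : ℕ) (t : ℝ) (h : r u w) (ht : t ∈ Icc (1 / ((k : ℝ) + 3)) (1 - 1 / ((k : ℝ) + 3))) : Pt r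

namespace Pt

variable {N : Type v} {r : N → N → Prop}

/-- basic neighbourhoods of vertices -/
def B (r : N → N → Prop) (O : Set N) (ε : ℝ) : Set (Pt r)
  | vx n => n ∈ O
  | pt u w _ t _ _ => (u ∈ O ∧ t < ε) ∨ (w ∈ O ∧ 1 - t < ε)

theorem mem_B_vx {O : Set N} {ε : ℝ} {n : N} : (vx n : Pt r) ∈ B r O ε ↔ n ∈ O := Iff.rfl

theorem mem_B_pt {O : Set N} {ε : ℝ} {u w : N} {k : ℕ} {t : ℝ} {h : r u w} {ht} :
    (pt u w k t h ht : Pt r) ∈ B r O ε ↔ (u ∈ O ∧ t < ε) ∨ (w ∈ O ∧ 1 - t < ε) := Iff.rfl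

theorem B_mono {O O' : Set N} {ε ε' : ℝ} (h : O ⊆ O') (he : ε ≤ ε') : B r O ε ⊆ B r O' ε' := by
  rintro (n | ⟨u, w, k, t, _, _⟩) hx
  · exact h hx
  · rcases hx with hx | hx
    · exact Or.inl ⟨h hx.1, hx.2.trans_le he⟩
    · exact Or.inr ⟨h hx.1, hx.2.trans_le he⟩

/-- local condition -/
def Nb [TopologicalSpace N] (s : Set (Pt r)) : Pt r → Prop
  | vx n => ∃ O ∈ 𝓝 n, ∃ ε > 0, B r O ε ⊆ s
  | pt u w k t h _ => ∃ ε > 0, ∀ t' ht', |t' - t| < ε → pt u w k t' h ht' ∈ s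

theorem Nb_mono [TopologicalSpace N] {s s' : Set (Pt r)} (h : s ⊆ s') {x : Pt r} (hx : Nb s x) :
    Nb s' x := by
  rcases x with n | ⟨u, w, k, t, hr, ht⟩
  · obtain ⟨O, hO, ε, hε, hB⟩ := hx
    exact ⟨O, hO, ε, hε, hB.trans h⟩
  · obtain ⟨ε, hε, hB⟩ := hx
    exact ⟨ε, hε, fun t' ht' hh => h (hB t' ht' hh)⟩

instance [TopologicalSpace N] : TopologicalSpace (Pt r) where
  IsOpen s := ∀ x ∈ s, Nb s x
  isOpen_univ := by
    rintro (n | ⟨u, w, k, t, hr, ht⟩) -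
    · exact ⟨univ, univ_mem, 1, one_pos, subset_univ _⟩
    · exact ⟨1, one_pos, fun _ _ _ => mem_univ _⟩
  isOpen_inter := by
    rintro s s' hs hs' x ⟨hx, hx'⟩
    have h1 := hs x hx
    have h2 := hs' x hx'
    rcases x with n | ⟨u, w, k, t, hr, ht⟩
    · obtain ⟨O, hO, ε, hε, hB⟩ := h1
      obtain ⟨O', hO', ε', hε', hB'⟩ := h2
      exact ⟨O ∩ O', inter_mem hO hO', min ε ε', lt_min hε hε', subset_inter
        ((B_mono inter_subset_left (min_le_left _ _)).trans hB)
        ((B_mono inter_subset_right (min_le_right _ _)).trans hB')⟩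
    · obtain ⟨ε, hε, hB⟩ := h1
      obtain ⟨ε', hε', hB'⟩ := h2
      exact ⟨min ε ε', lt_min hε hε', fun t' ht' hh =>
        ⟨hB t' ht' (hh.trans_le (min_le_left _ _)), hB' t' ht' (hh.trans_le (min_le_right _ _))⟩⟩
  isOpen_sUnion := by
    rintro S hS x ⟨s, hs, hx⟩
    exact Nb_mono (subset_sUnion_of_mem hs) (hS s hs x hx)

variable [TopologicalSpace N]

theorem isOpen_iff {s : Set (Pt r)} : IsOpen s ↔ ∀ x ∈ s, Nb s x := Iff.rfl

theorem isOpen_B {O : Set N} (hO : IsOpen O) {ε : ℝ} (hε : 0 < ε) : IsOpen (B r O ε) := by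
  rw [isOpen_iff]
  rintro (n | ⟨u, w, k, t, hr, ht⟩) hx
  · exact ⟨O, hO.mem_nhds hx, ε, hε, Subset.rfl⟩
  · rcases hx with hx | hx
    · refine ⟨ε - t, by linarith [hx.2], fun t' ht' hh => Or.inl ⟨hx.1, ?_⟩⟩
      linarith [(abs_lt.1 hh).2]
    · refine ⟨ε - (1 - t), by linarith [hx.2], fun t' ht' hh => Or.inr ⟨hx.1, ?_⟩⟩
      linarith [(abs_lt.1 hh).1]

theorem mem_nhds_vx {n : N} {U : Set (Pt r)} :
    U ∈ 𝓝 (vx n : Pt r) ↔ ∃ O ∈ 𝓝 n, ∃ ε > 0, B r O ε ⊆ U := by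
  constructor
  · intro h
    obtain ⟨s, hsU, hs, hx⟩ := mem_nhds_iff.1 h
    exact Nb_mono hsU (hs _ hx)
  · rintro ⟨O, hO, ε, hε, hB⟩
    obtain ⟨O', hO'O, hO', hn⟩ := mem_nhds_iff.1 hO
    exact mem_nhds_iff.2 ⟨B r O' ε, (B_mono hO'O le_rfl).trans hB, isOpen_B hO' hε, hn⟩

theorem B_mem_nhds {n : N} {O : Set N} (hO : O ∈ 𝓝 n) {ε : ℝ} (hε : 0 < ε) :
    B r O ε ∈ 𝓝 (vx n : Pt r) := mem_nhds_vx.2 ⟨O, hO, ε, hε, Subset.rfl⟩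

theorem mem_nhds_pt {u w : N} {k : ℕ} {t : ℝ} {h : r u w} {ht} {U : Set (Pt r)} :
    U ∈ 𝓝 (pt u w k t h ht : Pt r) ↔
      ∃ ε > 0, ∀ t' ht', |t' - t| < ε → (pt u w k t' h ht' : Pt r) ∈ U := by
  constructor
  · intro h
    obtain ⟨s, hsU, hs, hx⟩ := mem_nhds_iff.1 h
    exact Nb_mono hsU (hs _ hx)
  · rintro ⟨ε, hε, hB⟩
    refine mem_nhds_iff.2 ⟨{x | ∃ t' ht', |t' - t| < ε ∧ x = pt u w k t' h ht'}, ?_, ?_, ?_⟩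
    · rintro _ ⟨t', ht', hh, rfl⟩
      exact hB t' ht' hh
    · rw [isOpen_iff]
      rintro _ ⟨t', ht', hh, rfl⟩
      refine ⟨ε - |t' - t|, by linarith, fun t'' ht'' hh'' => ⟨t'', ht'', ?_, rfl⟩⟩
      have := abs_sub_le t'' t' t
      linarith
    · exact ⟨t, ht, by simpa using hε, rfl⟩

theorem continuous_arc (u w : N) (k : ℕ) (h : r u w) :
    Continuous (fun t : Icc (1 / ((k : ℝ) + 3)) (1 - 1 / ((k : ℝ) + 3)) =>
      (pt u w k t.1 h t.2 : Pt r)) := by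
  rw [continuous_iff_continuousAt]
  rintro ⟨t, ht⟩ U hU
  obtain ⟨ε, hε, hB⟩ := mem_nhds_pt.1 hU
  refine Metric.mem_nhds_iff.2 ⟨ε, hε, ?_⟩
  rintro ⟨t', ht'⟩ hh
  exact hB t' ht' hh

/-- an arc -/
def arc (r : N → N → Prop) (a : N × N × ℕ) : Set (Pt r)
  | vx _ => False
  | pt u w k _ _ _ => (u, w, k) = a

theorem isClopen_arc (a : N × N × ℕ) : IsClopen (arc r a) := by
  constructor
  · rw [← isOpen_compl_iff, isOpen_iff]
    rintro (n | ⟨u, w, k, t, hr, ht⟩) hx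
    · refine ⟨univ, univ_mem, 1 / ((a.2.2 : ℝ) + 3), by positivity, ?_⟩
      rintro (n | ⟨u, w, k, t, hr, ht⟩) hx
      · exact fun h => h
      · intro h
        have h : (u, w, k) = a := h
        subst h
        rcases hx with hx | hx
        · exact absurd hx.2 (not_lt.2 ht.1)
        · have := hx.2
          have := ht.2
          simp only at *
          linarith
    · exact ⟨1, one_pos, fun t' ht' _ => hx⟩
  · rw [isOpen_iff]
    rintro (n | ⟨u, w, k, t, hr, ht⟩) hx
    · exact hx.elim
    · exact ⟨1, one_pos, fun t' ht' _ => hx⟩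

/-- the parameter on arcs -/
def tau (a : N × N × ℕ) : Pt r → ℝ
  | vx _ => 0
  | pt _ _ _ t _ _ => t

theorem continuousOn_tau (a : N × N × ℕ) : ContinuousOn (tau a : Pt r → ℝ) (arc r a) := by
  rintro (n | ⟨u, w, k, t, hr, ht⟩) hx
  · exact hx.elim
  · apply ContinuousAt.continuousWithinAt
    intro U hU
    obtain ⟨ε, hε, hB⟩ := Metric.mem_nhds_iff.1 hU
    exact mem_nhds_pt.2 ⟨ε, hε, fun t' ht' hh => hB hh⟩

theorem arc_ext {a : N × N × ℕ} {x y : Pt r} (hx : x ∈ arc r a) (hy : y ∈ arc r a)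
    (h : tau a x = tau a y) : x = y := by
  rcases x with n | ⟨u, w, k, t, hr, ht⟩
  · exact hx.elim
  rcases y with n | ⟨u', w', k', t', hr', ht'⟩
  · exact hy.elim
  have hx : (u, w, k) = a := hx
  have hy : (u', w', k') = a := hy
  subst hx
  cases hy
  have h : t = t' := h
  subst h
  rfl

theorem isEmbedding_vx : IsEmbedding (vx : N → Pt r) := by
  refine ⟨isInducing_iff_nhds.2 fun n => ?_, fun a b h => by cases h; rfl⟩
  ext U
  rw [mem_comap]
  constructor
  · intro hU
    exact ⟨B r U 1, B_mem_nhds hU one_pos, fun m hm => hm⟩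
  · rintro ⟨V, hV, hVU⟩
    obtain ⟨O, hO, ε, hε, hB⟩ := mem_nhds_vx.1 hV
    exact mem_of_superset hO fun m hm => hVU (hB hm)

/-- the part of the space over a set of vertices -/
def hat (r : N → N → Prop) (S : Set N) : Set (Pt r)
  | vx n => n ∈ S
  | pt u _ _ _ _ _ => u ∈ S

theorem isOpen_hat {S : Set N} (hS : IsOpen S) (hr : ∀ u w, r u w → (u ∈ S ↔ w ∈ S)) :
    IsOpen (hat r S) := by
  rw [isOpen_iff]
  rintro (n | ⟨u, w, k, t, h, ht⟩) hx
  · refine ⟨S, hS.mem_nhds hx, 1, one_pos, ?_⟩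
    rintro (n | ⟨u, w, k, t, h, ht⟩) hx
    · exact hx
    · rcases hx with hx | hx
      · exact hx.1
      · exact (hr _ _ h).2 hx.1
  · exact ⟨1, one_pos, fun t' ht' _ => hx⟩

theorem isClopen_hat {S : Set N} (hS : IsClopen S) (hr : ∀ u w, r u w → (u ∈ S ↔ w ∈ S)) :
    IsClopen (hat r S) := by
  refine ⟨?_, isOpen_hat hS.2 hr⟩
  have : (hat r S)ᶜ = hat r Sᶜ := by
    ext x
    rcases x with n | ⟨u, w, k, t, h, ht⟩ <;> rfl
  rw [← isOpen_compl_iff, this]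
  exact isOpen_hat hS.1.isOpen_compl fun u w h => not_congr (hr u w h)

/-- functoriality -/
def map (φ : N → N) (hφ : ∀ u w, r u w → r (φ u) (φ w)) : Pt r → Pt r
  | vx n => vx (φ n)
  | pt u w k t h ht => pt (φ u) (φ w) k t (hφ _ _ h) ht

theorem map_preimage_B (φ : N → N) (hφ : ∀ u w, r u w → r (φ u) (φ w)) (O : Set N) (ε : ℝ) :
    map φ hφ ⁻¹' (B r O ε) = B r (φ ⁻¹' O) ε := by
  ext x
  rcases x with n | ⟨u, w, k, t, h, ht⟩ <;> rfl

theorem isEmbedding_map (φ : N → N) (hφ : ∀ u w, r u w → r (φ u) (φ w)) (he : IsEmbedding φ) :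
    IsEmbedding (map φ hφ) := by
  refine ⟨isInducing_iff_nhds.2 fun x => ?_, ?_⟩
  · ext U
    rw [mem_comap]
    rcases x with n | ⟨u, w, k, t, h, ht⟩
    · constructor
      · intro hU
        obtain ⟨O, hO, ε, hε, hB⟩ := mem_nhds_vx.1 hU
        rw [he.isInducing.nhds_eq_comap, mem_comap] at hO
        obtain ⟨O', hO', hsub⟩ := hO
        refine ⟨B r O' ε, B_mem_nhds hO' hε, ?_⟩
        rw [map_preimage_B]
        exact (B_mono hsub le_rfl).trans hB
      · rintro ⟨V, hV, hVU⟩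
        obtain ⟨O, hO, ε, hε, hB⟩ := mem_nhds_vx.1 hV
        refine mem_nhds_vx.2 ⟨φ ⁻¹' O, he.continuous.continuousAt hO, ε, hε, ?_⟩
        rw [← map_preimage_B φ hφ]
        exact (preimage_mono hB).trans hVU
    · constructor
      · intro hU
        obtain ⟨ε, hε, hB⟩ := mem_nhds_pt.1 hU
        refine ⟨{x | ∃ t' ht', |t' - t| < ε ∧ x = pt (φ u) (φ w) k t' (hφ _ _ h) ht'},
          mem_nhds_pt.2 ⟨ε, hε, fun t' ht' hh => ⟨t', ht', hh, rfl⟩⟩, ?_⟩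
        rintro (n | ⟨u', w', k', t'', h', ht''⟩) ⟨t', ht', hh, heq⟩
        · cases heq
        · simp only [map, pt.injEq] at heq
          obtain ⟨h1, h2, h3, h4⟩ := heq
          have h1 := he.injective h1
          have h2 := he.injective h2
          subst h1 h2 h3 h4
          exact hB _ _ hh
      · rintro ⟨V, hV, hVU⟩
        obtain ⟨ε, hε, hB⟩ := mem_nhds_pt.1 hV
        exact mem_nhds_pt.2 ⟨ε, hε, fun t' ht' hh => hVU (hB t' ht' hh)⟩
  · rintro (n | ⟨u, w, k, t, h, ht⟩) (n' | ⟨u', w', k', t', h', ht'⟩) heq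
    · simp only [map, vx.injEq] at heq
      rw [he.injective heq]
    · cases heq
    · cases heq
    · simp only [map, pt.injEq] at heq
      obtain ⟨h1, h2, h3, h4⟩ := heq
      have h1 := he.injective h1
      have h2 := he.injective h2
      subst h1 h2 h3 h4
      rfl

theorem isClosed_range_map (φ : N → N) (hφ : ∀ u w, r u w → r (φ u) (φ w))
    (hc : IsClosed (range φ)) : IsClosed (range (map φ hφ)) := by
  rw [← isOpen_compl_iff, isOpen_iff]
  rintro (n | ⟨u, w, k, t, h, ht⟩) hx
  · refine ⟨(range φ)ᶜ, hc.isOpen_compl.mem_nhds ?_, 1, one_pos, ?_⟩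
    · rintro ⟨m, rfl⟩
      exact hx ⟨vx m, rfl⟩
    · rintro _ hy ⟨(m | ⟨u, w, k, t, h, ht⟩), rfl⟩
      · exact hy ⟨m, rfl⟩
      · rcases hy with hy | hy
        · exact hy.1 ⟨u, rfl⟩
        · exact hy.1 ⟨w, rfl⟩
  · refine ⟨1, one_pos, ?_⟩
    rintro t' ht' - ⟨(m | ⟨u', w', k', t'', h', ht''⟩), heq⟩
    · cases heq
    · simp only [map, pt.injEq] at heq
      obtain ⟨h1, h2, h3, h4⟩ := heq
      subst h1 h2 h3 h4
      exact hx ⟨pt u' w' k' t h' ht, rfl⟩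

theorem isOpen_range_map (hs : ∀ u w, r u w → r w u) (φ : N → N)
    (hφ : ∀ u w, r u w → r (φ u) (φ w)) (hc : IsOpen (range φ))
    (href : ∀ u w, r (φ u) w → ∃ w', w = φ w' ∧ r u w') : IsOpen (range (map φ hφ)) := by
  have key : ∀ u w k t h ht, (u ∈ range φ ∨ w ∈ range φ) → (pt u w k t h ht : Pt r) ∈ range (map φ hφ) := by
    rintro u w k t h ht (⟨u, rfl⟩ | ⟨w, rfl⟩)
    · obtain ⟨w', rfl, h'⟩ := href u w h
      exact ⟨pt u w' k t h' ht, rfl⟩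
    · obtain ⟨u', rfl, h'⟩ := href w u (hs _ _ h)
      exact ⟨pt u' w k t (hs _ _ h') ht, rfl⟩
  rw [isOpen_iff]
  rintro _ ⟨(m | ⟨u, w, k, t, h, ht⟩), rfl⟩
  · refine ⟨range φ, hc.mem_nhds ⟨m, rfl⟩, 1, one_pos, ?_⟩
    rintro (n | ⟨u, w, k, t, h, ht⟩) hx
    · obtain ⟨n, rfl⟩ := hx
      exact ⟨vx n, rfl⟩
    · exact key _ _ _ _ _ _ (hx.imp And.left And.left)
  · exact ⟨1, one_pos, fun t' ht' _ => ⟨pt u w k t' h ht', rfl⟩⟩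

theorem t0 [T1Space N] : T0Space (Pt r) := by
  rw [t0Space_iff_inseparable]
  have key : ∀ x y : Pt r, Inseparable x y → ∀ U ∈ 𝓝 x, y ∈ U := by
    intro x y h U hU
    rw [h.nhds_eq] at hU
    exact mem_of_mem_nhds hU
  have key2 : ∀ u w k t h ht (y : Pt r), Inseparable (pt u w k t h ht : Pt r) y →
      (pt u w k t h ht : Pt r) = y := by
    intro u w k t h ht y hy
    have h1 := key _ _ hy (arc r (u,w,k)) ((isClopen_arc _).2.mem_nhds rfl)
    refine arc_ext (a := (u,w,k)) rfl h1 ?_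
    have hc := (continuousOn_tau (r := r) (u,w,k)).continuousAt ((isClopen_arc _).2.mem_nhds
      (show (pt u w k t h ht : Pt r) ∈ arc r (u,w,k) from rfl))
    by_contra hne
    have := key _ _ hy _ (hc.eventually (isOpen_ne.mem_nhds hne))
    exact this rfl
  rintro (n | ⟨u, w, k, t, h, ht⟩) y hy
  · rcases y with m | ⟨u', w', k', t', h', ht'⟩
    · by_contra hne
      have hne' : n ≠ m := fun h => hne (by rw [h])
      have := key _ _ hy (B r {m}ᶜ 1) (B_mem_nhds (isOpen_compl_singleton.mem_nhds hne') one_pos)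
      exact this rfl
    · exact (key2 _ _ _ _ _ _ _ hy.symm).symm
  · exact key2 _ _ _ _ _ _ _ hy

end Pt

end PtSpace


section PtMetr

open Set Filter Topology

universe v

namespace Pt

variable {N : Type v} {r : N → N → Prop} [TopologicalSpace N]

/-- space of arcs coordinates -/
abbrev LA (N : Type v) := lp (fun _ : N × N × ℕ => ℝ × ℝ) 2

open Classical in
/-- the embedding -/
noncomputable def Phi {E : Type v} [NormedAddCommGroup E] [NormedSpace ℝ E] (y : N → E) :
    Pt r → E × LA N
  | vx n => (y n, 0)
  | pt u w k t _ _ => (y u + t • (y w - y u), lp.single 2 (u, w, k) (t * (1 - t), t * (t * (1 - t))))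

theorem LA_cont (a : N × N × ℕ) : Continuous (fun z : LA N => z a) := by
  refine (LipschitzWith.of_dist_le_mul (K := 1) fun z z' => ?_).continuous
  rw [dist_eq_norm, dist_eq_norm]
  have := lp.norm_apply_le_norm (p := 2) (by norm_num) (z - z') a
  simpa using this

theorem isInducing_Phi {E : Type v} [NormedAddCommGroup E] [NormedSpace ℝ E] (y : N → E)
    (hy : IsInducing y) (hb : ∀ n, ‖y n‖ ≤ 2) : IsInducing (Phi y : Pt r → E × LA N) := by
  classical
  have hd : ∀ u w, ‖y w - y u‖ ≤ 4 := fun u w => (norm_sub_le _ _).trans (by linarith [hb u, hb w])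
  rw [isInducing_iff_nhds]
  intro x
  apply le_antisymm
  · rw [← tendsto_iff_comap]
    rcases x with n | ⟨u, w, k, t, h, ht⟩
    · rw [Metric.tendsto_nhds]
      intro δ hδ
      have hO : {m | dist (y m) (y n) < δ / 2} ∈ 𝓝 n :=
        hy.continuous.continuousAt (Metric.ball_mem_nhds (y n) (half_pos hδ))
      refine mem_of_superset (B_mem_nhds hO (ε := δ / 16) (by positivity)) ?_
      rintro (m | ⟨u, w, k, t, h, ht⟩) hx
      · have hx : dist (y m) (y n) < δ / 2 := hx
        simp only [Phi, mem_ofPred_eq, Prod.dist_eq, dist_self]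
        exact max_lt (by linarith) hδ
      · have h0 : 0 ≤ t := le_trans (by positivity) ht.1
        have h1 : t ≤ 1 := ht.2.trans (by simp; positivity)
        have hnorm : ‖(lp.single 2 (u, w, k) (t * (1 - t), t * (t * (1 - t))) : LA N)‖ ≤ t * (1 - t) := by
          rw [lp.norm_single (by norm_num), Prod.norm_def]
          have hh : 0 ≤ t * (1 - t) := mul_nonneg h0 (by linarith)
          simp only [Real.norm_eq_abs]
          rw [abs_of_nonneg hh, abs_of_nonneg (mul_nonneg h0 hh)]
          exact max_le le_rfl (by nlinarith)
        simp only [Phi, mem_ofPred_eq, Prod.dist_eq]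
        rcases hx with ⟨hu, hlt⟩ | ⟨hw, hlt⟩
        · have hu : dist (y u) (y n) < δ / 2 := hu
          refine max_lt ?_ ?_
          · rw [dist_eq_norm] at hu ⊢
            have e : y u + t • (y w - y u) - y n = (y u - y n) + t • (y w - y u) := by abel
            rw [e]
            refine (norm_add_le _ _).trans_lt ?_
            rw [norm_smul, Real.norm_eq_abs, abs_of_nonneg h0]
            nlinarith [hd u w, norm_nonneg (y w - y u)]
          · rw [dist_zero_right]
            refine hnorm.trans_lt ?_
            nlinarith
        · have hw : dist (y w) (y n) < δ / 2 := hw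
          refine max_lt ?_ ?_
          · rw [dist_eq_norm] at hw ⊢
            have e : y u + t • (y w - y u) - y n = (y w - y n) - (1 - t) • (y w - y u) := by
              rw [sub_smul, one_smul]; abel
            rw [e]
            refine (norm_sub_le _ _).trans_lt ?_
            rw [norm_smul, Real.norm_eq_abs, abs_of_nonneg (sub_nonneg.2 h1)]
            nlinarith [hd u w, norm_nonneg (y w - y u)]
          · rw [dist_zero_right]
            refine hnorm.trans_lt ?_
            nlinarith
    · have hc : Continuous (fun t : ℝ => ((y u + t • (y w - y u),
          lp.single 2 (u, w, k) (t * (1 - t), t * (t * (1 - t)))) : E × LA N)) := by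
        refine Continuous.prodMk (by fun_prop) ?_
        exact (lp.isometry_single (E := fun _ : N × N × ℕ => ℝ × ℝ) (p := 2) (u,w,k)).continuous.comp
          (by fun_prop)
      intro V hV
      obtain ⟨ε, hε, hB⟩ := Metric.mem_nhds_iff.1 (hc.continuousAt hV)
      exact mem_nhds_pt.2 ⟨ε, hε, fun t' ht' hh => hB (show t' ∈ Metric.ball t ε from hh)⟩
  · intro U hU
    rw [mem_comap]
    rcases x with n | ⟨u, w, k, t, h, ht⟩
    · obtain ⟨O, hO, ε, hε, hB⟩ := mem_nhds_vx.1 hU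
      rw [hy.nhds_eq_comap, mem_comap] at hO
      obtain ⟨V, hV, hVO⟩ := hO
      obtain ⟨δ, hδ, hball⟩ := Metric.mem_nhds_iff.1 hV
      have hOm : ∀ m, dist (y m) (y n) < δ → m ∈ O := fun m hm => hVO (hball hm)
      set η := min (ε / 2) (δ / 16) with hη
      have hηpos : 0 < η := lt_min (by positivity) (by positivity)
      have hη1 : η ≤ ε / 2 := min_le_left _ _
      have hη2 : η ≤ δ / 16 := min_le_right _ _
      refine ⟨Metric.ball (y n, 0) η, Metric.ball_mem_nhds _ hηpos, ?_⟩
      refine Subset.trans ?_ hB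
      rintro (m | ⟨u, w, k, t, h, ht⟩) hx
      · simp only [mem_preimage, Phi, Metric.mem_ball, Prod.dist_eq] at hx
        exact hOm m (((le_max_left _ _).trans_lt hx).trans_le (by linarith))
      · simp only [mem_preimage, Phi, Metric.mem_ball, Prod.dist_eq] at hx
        have hx1 := (le_max_left _ _).trans_lt hx
        have hx2 := (le_max_right _ _).trans_lt hx
        have h0 : 0 ≤ t := le_trans (by positivity) ht.1
        have h1 : t ≤ 1 := ht.2.trans (by simp; positivity)
        have hh : 0 ≤ t * (1 - t) := mul_nonneg h0 (by linarith)
        rw [dist_zero_right, lp.norm_single (by norm_num), Prod.norm_def] at hx2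
        have hx3 := (le_max_left _ _).trans_lt hx2
        simp only [Real.norm_eq_abs] at hx3
        rw [abs_of_nonneg hh] at hx3
        rw [dist_eq_norm] at hx1
        rcases le_total t (1/2) with ht2 | ht2
        · have htη : t < 2 * η := by nlinarith
          refine Or.inl ⟨hOm u ?_, by linarith⟩
          rw [dist_eq_norm]
          have e : y u - y n = (y u + t • (y w - y u) - y n) - t • (y w - y u) := by abel
          rw [e]
          refine (norm_sub_le _ _).trans_lt ?_
          rw [norm_smul, Real.norm_eq_abs, abs_of_nonneg h0]
          nlinarith [hd u w, norm_nonneg (y w - y u)]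
        · have htη : 1 - t < 2 * η := by nlinarith
          refine Or.inr ⟨hOm w ?_, by linarith⟩
          rw [dist_eq_norm]
          have e : y w - y n = (y u + t • (y w - y u) - y n) + (1 - t) • (y w - y u) := by
            rw [sub_smul, one_smul]; abel
          rw [e]
          refine (norm_add_le _ _).trans_lt ?_
          rw [norm_smul, Real.norm_eq_abs, abs_of_nonneg (sub_nonneg.2 h1)]
          nlinarith [hd u w, norm_nonneg (y w - y u)]
    · obtain ⟨ε, hε, hB⟩ := mem_nhds_pt.1 hU
      have hpos : ∀ (k : ℕ) (t : ℝ), t ∈ Icc (1 / ((k : ℝ) + 3)) (1 - 1 / ((k : ℝ) + 3)) → t * (1 - t) ≠ 0 := by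
        intro k t ht
        have : 0 < 1 / ((k : ℝ) + 3) := by positivity
        exact (mul_pos (by linarith [ht.1]) (by linarith [ht.2])).ne'
      let g : E × LA N → ℝ × ℝ := fun z => z.2 (u,w,k)
      have hg : Continuous g := (LA_cont (u,w,k)).comp continuous_snd
      have hg0 : g (Phi y (pt u w k t h ht : Pt r)) = (t * (1 - t), t * (t * (1 - t))) := by
        simp only [g, Phi]
        exact lp.single_apply_self _ _ _
      have hne : (g (Phi y (pt u w k t h ht : Pt r))).1 ≠ 0 := by
        rw [hg0]
        exact hpos k t ht
      have hc : ContinuousAt (fun z => (g z).2 / (g z).1) (Phi y (pt u w k t h ht : Pt r)) :=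
        (continuous_snd.comp hg).continuousAt.div (continuous_fst.comp hg).continuousAt hne
      have hv : (g (Phi y (pt u w k t h ht : Pt r))).2 / (g (Phi y (pt u w k t h ht : Pt r))).1 = t := by
        rw [hg0]
        exact mul_div_cancel_right₀ _ (hpos k t ht)
      have e1 := (continuous_fst.comp hg).continuousAt.eventually_ne hne
      have e2 := Metric.tendsto_nhds.1 hc ε hε
      simp only [hv] at e2
      refine ⟨_, e1.and e2, ?_⟩
      rintro (m | ⟨u', w', k', t', h', ht'⟩) ⟨hx1, hx2⟩
      · exact absurd (by simp [g, Phi]) hx1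
      · have ha : (u', w', k') = (u, w, k) := by
          by_contra hne
          refine hx1 ?_
          simp only [g, Phi, Function.comp]
          rw [lp.single_apply_ne _ _ _ (Ne.symm hne)]
          rfl
        cases ha
        have hg0 : g (Phi y (pt u w k t' h' ht' : Pt r)) = (t' * (1 - t'), t' * (t' * (1 - t'))) := by
          simp only [g, Phi]
          exact lp.single_apply_self _ _ _
        rw [hg0, mul_div_cancel_right₀ _ (hpos k t' ht')] at hx2
        exact hB t' ht' hx2

theorem metrizable [T1Space N] {E : Type v} [NormedAddCommGroup E] [NormedSpace ℝ E] (y : N → E)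
    (hy : IsInducing y) (hb : ∀ n, ‖y n‖ ≤ 2) : TopologicalSpace.MetrizableSpace (Pt r) := by
  have : T0Space (Pt r) := t0
  exact (isInducing_Phi (r := r) y hy hb).isEmbedding.metrizableSpace

end Pt

/-- topological adjacency -/
def TAdj {X : Type*} [TopologicalSpace X] (x y : X) : Prop :=
  x ≠ y ∧ ∃ (K : ℕ → Set X) (a b : ℕ → X), (∀ k, IsPreconnected (K k)) ∧
    (∀ k l, k ≠ l → Disjoint (K k) (K l)) ∧ (∀ k, a k ∈ K k) ∧ (∀ k, b k ∈ K k) ∧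
    Tendsto a atTop (𝓝 x) ∧ Tendsto b atTop (𝓝 y)

theorem TAdj.symm {X : Type*} [TopologicalSpace X] {x y : X} (h : TAdj x y) : TAdj y x := by
  obtain ⟨hne, K, a, b, h1, h2, h3, h4, h5, h6⟩ := h
  exact ⟨hne.symm, K, b, a, h1, h2, h4, h3, h6, h5⟩

theorem TAdj.map {X Y : Type*} [TopologicalSpace X] [TopologicalSpace Y] {x y : X} (h : TAdj x y)
    {f : X → Y} (hf : Continuous f) (hi : Function.Injective f) : TAdj (f x) (f y) := by
  obtain ⟨hne, K, a, b, h1, h2, h3, h4, h5, h6⟩ := h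
  exact ⟨hi.ne hne, fun k => f '' K k, f ∘ a, f ∘ b, fun k => (h1 k).image f hf.continuousOn,
    fun k l hkl => (disjoint_image_iff hi).2 (h2 k l hkl),
    fun k => mem_image_of_mem f (h3 k), fun k => mem_image_of_mem f (h4 k),
    (hf.tendsto x).comp h5, (hf.tendsto y).comp h6⟩

theorem TAdj.restrict {X : Type*} [TopologicalSpace X] {x y : X} (h : TAdj x y)
    {D : Set X} (hD : IsClopen D) (hx : x ∈ D) : ∃ hy : y ∈ D, TAdj (⟨x, hx⟩ : D) ⟨y, hy⟩ := by
  obtain ⟨hne, K, a, b, h1, h2, h3, h4, h5, h6⟩ := h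
  have he : ∀ᶠ k in atTop, a k ∈ D := h5 (hD.2.mem_nhds hx)
  obtain ⟨n0, hn0⟩ := eventually_atTop.1 he
  have hKD : ∀ k, K (k + n0) ⊆ D := fun k =>
    (h1 _).subset_isClopen hD ⟨a (k + n0), h3 _, hn0 _ (by omega)⟩
  have hy : y ∈ D := by
    refine hD.1.mem_of_tendsto h6 (eventually_atTop.2 ⟨n0, fun k hk => ?_⟩)
    obtain ⟨l, rfl⟩ := Nat.exists_eq_add_of_le' hk
    exact hKD l (h4 _)
  refine ⟨hy, fun h => hne (congrArg Subtype.val h), fun k => Subtype.val ⁻¹' (K (k + n0)),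
    fun k => ⟨a (k + n0), hKD k (h3 _)⟩, fun k => ⟨b (k + n0), hKD k (h4 _)⟩, ?_, ?_, ?_, ?_, ?_, ?_⟩
  · intro k
    rw [← IsInducing.subtypeVal.isPreconnected_image, Subtype.image_preimage_coe,
      inter_eq_right.2 (hKD k)]
    exact h1 _
  · exact fun k l hkl => (h2 _ _ (by omega)).preimage _
  · exact fun k => h3 _
  · exact fun k => h4 _
  · rw [tendsto_subtype_rng]
    exact h5.comp (tendsto_add_atTop_nat n0)
  · rw [tendsto_subtype_rng]
    exact h6.comp (tendsto_add_atTop_nat n0)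

namespace Pt

variable {N : Type v} {r : N → N → Prop} [TopologicalSpace N]

theorem lo_le (k : ℕ) : 1 / ((k : ℝ) + 3) ≤ 1 - 1 / ((k : ℝ) + 3) := by
  have : 1 / ((k : ℝ) + 3) ≤ 1 / 3 := by
    apply one_div_le_one_div_of_le <;> [norm_num; linarith [Nat.cast_nonneg (α := ℝ) k]]
  linarith

theorem lo_tendsto : Tendsto (fun k : ℕ => 1 / ((k : ℝ) + 3)) atTop (𝓝 0) := by
  have := (tendsto_const_div_atTop_nhds_zero_nat (1 : ℝ)).comp (tendsto_add_atTop_nat 3)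
  refine this.congr fun k => ?_
  simp

theorem tadj_of_r {n m : N} (h : r n m) (hne : n ≠ m) : TAdj (vx n : Pt r) (vx m) := by
  refine ⟨fun hh => hne (by cases hh; rfl), fun k => range
    (fun t : Icc (1 / ((k : ℝ) + 3)) (1 - 1 / ((k : ℝ) + 3)) => (pt n m k t.1 h t.2 : Pt r)),
    fun k => pt n m k (1 / ((k : ℝ) + 3)) h ⟨le_rfl, lo_le k⟩,
    fun k => pt n m k (1 - 1 / ((k : ℝ) + 3)) h ⟨lo_le k, le_rfl⟩, ?_, ?_, ?_, ?_, ?_, ?_⟩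
  · intro k
    have : PreconnectedSpace (Icc (1 / ((k : ℝ) + 3)) (1 - 1 / ((k : ℝ) + 3))) :=
      Subtype.preconnectedSpace isPreconnected_Icc
    exact isPreconnected_range (continuous_arc n m k h)
  · intro k l hkl
    rw [Set.disjoint_left]
    rintro _ ⟨t, rfl⟩ ⟨t', h'⟩
    simp only [pt.injEq] at h'
    exact hkl h'.2.2.1.symm
  · exact fun k => ⟨⟨_, le_rfl, lo_le k⟩, rfl⟩
  · exact fun k => ⟨⟨_, lo_le k, le_rfl⟩, rfl⟩
  · intro U hU
    obtain ⟨O, hO, ε, hε, hB⟩ := mem_nhds_vx.1 hU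
    rw [mem_map]
    filter_upwards [lo_tendsto.eventually (gt_mem_nhds hε)] with k hk
    exact hB (Or.inl ⟨mem_of_mem_nhds hO, hk⟩)
  · intro U hU
    obtain ⟨O, hO, ε, hε, hB⟩ := mem_nhds_vx.1 hU
    rw [mem_map]
    filter_upwards [lo_tendsto.eventually (gt_mem_nhds hε)] with k hk
    exact hB (Or.inr ⟨mem_of_mem_nhds hO, by linarith⟩)

theorem arc_of_mem {K : Set (Pt r)} (hK : IsPreconnected K) {u w k t h ht}
    (hx : (pt u w k t h ht : Pt r) ∈ K) : K ⊆ arc r (u,w,k) :=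
  hK.subset_isClopen (isClopen_arc _) ⟨_, hx, rfl⟩

theorem not_tadj_pt {a : N × N × ℕ} {x y : Pt r} (hx : x ∈ arc r a) : ¬ TAdj x y := by
  intro h
  obtain ⟨hy, hne, K, c, b, h1, h2, h3, h4, h5, h6⟩ := h.restrict (isClopen_arc a) hx
  have hcont : Continuous (fun z : arc r a => tau a z.1) :=
    continuousOn_iff_continuous_domRestrict.1 (continuousOn_tau a)
  set s := tau a x
  set s' := tau a y
  have hs : s ≠ s' := fun h => hne (Subtype.ext (arc_ext hx hy h))
  have t1 : Tendsto (fun k => tau a (c k).1) atTop (𝓝 s) := (hcont.tendsto ⟨x, hx⟩).comp h5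
  have t2 : Tendsto (fun k => tau a (b k).1) atTop (𝓝 s') := (hcont.tendsto ⟨y, hy⟩).comp h6
  have key : ∀ᶠ k in atTop, ∃ z ∈ K k, tau a z.1 = (s + s') / 2 := by
    rcases lt_or_gt_of_ne hs with hlt | hlt
    · filter_upwards [t1.eventually (gt_mem_nhds (show s < (s + s') / 2 by linarith)),
        t2.eventually (lt_mem_nhds (show (s + s') / 2 < s' by linarith))] with k hk1 hk2
      exact (h1 k).intermediate_value (h3 k) (h4 k) hcont.continuousOn ⟨hk1.le, hk2.le⟩
    · filter_upwards [t1.eventually (lt_mem_nhds (show (s + s') / 2 < s by linarith)),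
        t2.eventually (gt_mem_nhds (show s' < (s + s') / 2 by linarith))] with k hk1 hk2
      exact (h1 k).intermediate_value (h4 k) (h3 k) hcont.continuousOn ⟨hk2.le, hk1.le⟩
  obtain ⟨n0, hn0⟩ := eventually_atTop.1 key
  obtain ⟨z, hz, hze⟩ := hn0 n0 le_rfl
  obtain ⟨z', hz', hze'⟩ := hn0 (n0 + 1) (by omega)
  have : z = z' := Subtype.ext (arc_ext z.2 z'.2 (hze.trans hze'.symm))
  subst this
  exact Set.disjoint_left.1 (h2 n0 (n0+1) (by omega)) hz hz'

theorem limadj_of_tadj [T2Space N] [TotallyDisconnectedSpace N] (hsymm : ∀ u w, r u w → r w u)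
    {x y : Pt r} (h : TAdj x y) : ∃ n m, x = vx n ∧ y = vx m ∧
      ∀ O ∈ 𝓝 n, ∀ O' ∈ 𝓝 m, ∃ u ∈ O, ∃ w ∈ O', r u w := by
  rcases x with n | ⟨u, w, k, t, hr, ht⟩
  swap
  · exact (not_tadj_pt (a := (u,w,k)) rfl h).elim
  rcases y with m | ⟨u, w, k, t, hr, ht⟩
  swap
  · exact (not_tadj_pt (a := (u,w,k)) rfl h.symm).elim
  refine ⟨n, m, rfl, rfl, ?_⟩
  obtain ⟨hne, K, a, b, h1, h2, h3, h4, h5, h6⟩ := h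
  have hnm : n ≠ m := fun h => hne (by rw [h])
  intro O hO O' hO'
  obtain ⟨V, V', hV, hV', hnV, hmV, hdisj⟩ := t2_separation hnm
  have hO1 := inter_mem hO (hV.mem_nhds hnV)
  have hO1' := inter_mem hO' (hV'.mem_nhds hmV)
  obtain ⟨k, hk, hk'⟩ := ((h5.eventually (B_mem_nhds hO1 (ε := 1/2) (by norm_num))).and
    (h6.eventually (B_mem_nhds hO1' (ε := 1/2) (by norm_num)))).exists
  have hk : a k ∈ B r (O ∩ V) (1/2) := hk
  have hk' : b k ∈ B r (O' ∩ V') (1/2) := hk'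
  have ha := h3 k
  have hb := h4 k
  have hdis : ∀ p, p ∈ O ∩ V → p ∈ O' ∩ V' → False := fun p hp hp' =>
    Set.disjoint_left.1 hdisj hp.2 hp'.2
  by_cases hK : ∃ u w k' t, ∃ hr : r u w, ∃ ht, (pt u w k' t hr ht : Pt r) ∈ K k
  · obtain ⟨u, w, k', t, hr, ht, hmem⟩ := hK
    have hsub := arc_of_mem (h1 k) hmem
    have ha' := hsub ha
    have hb' := hsub hb
    rcases hak : a k with p | ⟨u1, w1, k1, t1, hr1, ht1⟩
    · rw [hak] at ha'; exact ha'.elim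
    rcases hbk : b k with p | ⟨u2, w2, k2, t2, hr2, ht2⟩
    · rw [hbk] at hb'; exact hb'.elim
    rw [hak] at ha' hk
    rw [hbk] at hb' hk'
    cases ha'
    cases hb'
    rcases hk with hk | hk <;> rcases hk' with hk' | hk'
    · exact (hdis _ hk.1 hk'.1).elim
    · exact ⟨u, hk.1.1, w, hk'.1.1, hr⟩
    · exact ⟨w, hk.1.1, u, hk'.1.1, hsymm _ _ hr⟩
    · exact (hdis _ hk.1 hk'.1).elim
  · exfalso
    have hsub : K k ⊆ range (vx : N → Pt r) := by
      rintro (p | ⟨u, w, k', t, hr, ht⟩) hp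
      · exact ⟨p, rfl⟩
      · exact (hK ⟨u, w, k', t, hr, ht, hp⟩).elim
    have hpre : IsPreconnected ((vx : N → Pt r) ⁻¹' (K k)) := by
      rw [← isEmbedding_vx.isInducing.isPreconnected_image, image_preimage_eq_inter_range,
        inter_eq_left.2 hsub]
      exact h1 k
    obtain ⟨p, hp⟩ := hsub ha
    obtain ⟨p', hp'⟩ := hsub hb
    have : p = p' := hpre.subsingleton (by rw [mem_preimage, hp]; exact ha)
      (by rw [mem_preimage, hp']; exact hb)
    subst this
    rw [← hp] at hk
    rw [← hp'] at hk'
    exact hdis p hk hk'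

end Pt

end PtMetr


section NSpace

open Set Filter Topology

universe v

/-- the vertex space -/
inductive NS {I : Type v} (tg : I → Option (ℤ × ℕ)) : Type v
  | is (i : I) : NS tg
  | q (j : ℤ) : NS tg

namespace NS

variable {I : Type v} {tg : I → Option (ℤ × ℕ)}

instance : TopologicalSpace (NS tg) where
  IsOpen s := ∀ j, q j ∈ s → ∃ n0, ∀ i n, tg i = some (j, n) → n0 ≤ n → is i ∈ s
  isOpen_univ := fun _ _ => ⟨0, fun _ _ _ _ => mem_univ _⟩
  isOpen_inter := by
    rintro s s' hs hs' j ⟨hj, hj'⟩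
    obtain ⟨n0, h0⟩ := hs j hj
    obtain ⟨n1, h1⟩ := hs' j hj'
    exact ⟨max n0 n1, fun i n hi hn => ⟨h0 i n hi ((le_max_left _ _).trans hn),
      h1 i n hi ((le_max_right _ _).trans hn)⟩⟩
  isOpen_sUnion := by
    rintro S hS j ⟨s, hs, hj⟩
    obtain ⟨n0, h0⟩ := hS s hs j hj
    exact ⟨n0, fun i n hi hn => ⟨s, hs, h0 i n hi hn⟩⟩

theorem isOpen_iff {s : Set (NS tg)} : IsOpen s ↔
    ∀ j, q j ∈ s → ∃ n0, ∀ i n, tg i = some (j, n) → n0 ≤ n → is i ∈ s := Iff.rfl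

theorem isOpen_of_no_q {s : Set (NS tg)} (h : ∀ j, q j ∉ s) : IsOpen s :=
  fun j hj => (h j hj).elim

theorem isClosed_of_all_q {s : Set (NS tg)} (h : ∀ j, q j ∈ s) : IsClosed s :=
  isOpen_compl_iff.1 (isOpen_of_no_q fun j hj => hj (h j))

theorem mem_nhds_is {i : I} {U : Set (NS tg)} : U ∈ 𝓝 (is i : NS tg) ↔ is i ∈ U := by
  refine ⟨mem_of_mem_nhds, fun h => ?_⟩
  have : IsOpen ({is i} : Set (NS tg)) := isOpen_of_no_q fun j hj => by cases hj
  exact mem_of_superset (this.mem_nhds rfl) (singleton_subset_iff.2 h)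

theorem mem_nhds_q {j : ℤ} {U : Set (NS tg)} : U ∈ 𝓝 (q j : NS tg) ↔
    q j ∈ U ∧ ∃ n0, ∀ i n, tg i = some (j, n) → n0 ≤ n → is i ∈ U := by
  constructor
  · intro h
    obtain ⟨s, hsU, hs, hj⟩ := mem_nhds_iff.1 h
    obtain ⟨n0, h0⟩ := isOpen_iff.1 hs j hj
    exact ⟨hsU hj, n0, fun i n hi hn => hsU (h0 i n hi hn)⟩
  · rintro ⟨hj, n0, h0⟩
    refine mem_nhds_iff.2 ⟨{x | x = q j ∨ ∃ i n, tg i = some (j, n) ∧ n0 ≤ n ∧ x = is i}, ?_, ?_,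
      Or.inl rfl⟩
    · rintro _ (rfl | ⟨i, n, hi, hn, rfl⟩)
      · exact hj
      · exact h0 i n hi hn
    · rintro j' (hj' | ⟨i, n, hi, hn, hx⟩)
      · cases hj'
        exact ⟨n0, fun i n hi hn => Or.inr ⟨i, n, hi, hn, rfl⟩⟩
      · cases hx

/-- the cluster of a limit point -/
def cl (tg : I → Option (ℤ × ℕ)) (j : ℤ) : Set (NS tg)
  | is i => ∃ n, tg i = some (j, n)
  | q j' => j' = j

theorem isClopen_cl (j : ℤ) : IsClopen (cl tg j) := by
  constructor
  · rw [← isOpen_compl_iff]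
    intro j' hj'
    refine ⟨0, fun i n hi _ h => hj' ?_⟩
    obtain ⟨n', hn'⟩ := h
    rw [hi] at hn'
    cases hn'
    rfl
  · intro j' hj'
    cases hj'
    exact ⟨0, fun i n hi _ => ⟨n, hi⟩⟩

theorem isClopen_is (i : I) : IsClopen ({is i} : Set (NS tg)) := by
  refine ⟨?_, isOpen_of_no_q fun j hj => by cases hj⟩
  exact isClosed_of_all_q_compl i
where
  isClosed_of_all_q_compl (i : I) : IsClosed ({is i} : Set (NS tg)) := by
    rw [← isOpen_compl_iff]
    intro j _
    rcases h : tg i with _ | ⟨j', n'⟩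
    · refine ⟨0, fun i' n hi' _ hh => ?_⟩
      cases hh
      rw [h] at hi'
      cases hi'
    · refine ⟨n' + 1, fun i' n hi' hn hh => ?_⟩
      cases hh
      rw [h] at hi'
      cases hi'
      omega

instance : TotallySeparatedSpace (NS tg) := by
  rw [totallySeparatedSpace_iff_exists_isClopen]
  rintro (i | j) (i' | j') hne
  · exact ⟨{is i}, isClopen_is i, rfl, fun h => hne (by cases h; rfl)⟩
  · exact ⟨{is i}, isClopen_is i, rfl, fun h => hne (by cases h)⟩
  · refine ⟨{is i'}ᶜ, (isClopen_is i').compl, fun h => hne (by cases h), fun h => h rfl⟩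
  · exact ⟨cl tg j, isClopen_cl j, rfl, fun h => hne (by cases h; rfl)⟩

open Classical in
/-- the embedding of the vertex space -/
noncomputable def emb : NS tg → lp (fun _ : NS tg => ℝ) 2
  | is i => match tg i with
    | none => lp.single 2 (is i) (1 : ℝ)
    | some (j, n) => lp.single 2 (q j) (1 : ℝ) + lp.single 2 (is i) (1 / ((n : ℝ) + 1))
  | q j => lp.single 2 (q j) (1 : ℝ)

theorem emb_norm (x : NS tg) : ‖(emb x : lp (fun _ : NS tg => ℝ) 2)‖ ≤ 2 := by
  classical
  rcases x with i | j
  · simp only [emb]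
    split
    · rw [lp.norm_single (by norm_num)]; norm_num
    · rename_i j n h
      refine (norm_add_le _ _).trans ?_
      rw [lp.norm_single (by norm_num), lp.norm_single (by norm_num), Real.norm_eq_abs,
        Real.norm_eq_abs, abs_of_nonneg (by positivity), abs_of_nonneg (by positivity)]
      have : 1 / ((n : ℝ) + 1) ≤ 1 := by
        rw [div_le_one (by positivity)]
        linarith [Nat.cast_nonneg (α := ℝ) n]
      linarith
  · simp only [emb]
    rw [lp.norm_single (by norm_num)]; norm_num

theorem lp_cont {A : Type v} (a : A) : Continuous (fun z : lp (fun _ : A => ℝ) 2 => z a) := by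
  refine (LipschitzWith.of_dist_le_mul (K := 1) fun z z' => ?_).continuous
  rw [dist_eq_norm, dist_eq_norm]
  have := lp.norm_apply_le_norm (p := 2) (by norm_num) (z - z') a
  simpa using this

theorem emb_inducing : IsInducing (emb : NS tg → lp (fun _ : NS tg => ℝ) 2) := by
  classical
  rw [isInducing_iff_nhds]
  intro x
  apply le_antisymm
  · rw [← tendsto_iff_comap]
    rcases x with i | j
    · intro V hV
      have hV' := mem_of_mem_nhds hV
      exact mem_nhds_is.2 hV'
    · rw [Metric.tendsto_nhds]
      intro ε hε
      refine mem_nhds_q.2 ⟨by simpa using hε, ?_⟩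
      obtain ⟨n0, h0⟩ := exists_nat_one_div_lt hε
      refine ⟨n0, fun i n hi hn => ?_⟩
      show dist (emb (is i)) (emb (q j)) < ε
      simp only [emb, hi, dist_eq_norm, add_sub_cancel_left]
      rw [lp.norm_single (by norm_num), Real.norm_eq_abs, abs_of_nonneg (by positivity)]
      refine lt_of_le_of_lt ?_ h0
      apply one_div_le_one_div_of_le (by positivity)
      have : (n0 : ℝ) ≤ n := by exact_mod_cast hn
      linarith
  · intro U hU
    rw [mem_comap]
    rcases x with i | j
    · have hne : (emb (is i : NS tg) : lp (fun _ : NS tg => ℝ) 2) (is i) ≠ 0 := by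
        simp only [emb]
        split
        · rw [lp.single_apply_self]; norm_num
        · rename_i j n h
          rw [lp.coeFn_add, Pi.add_apply, lp.single_apply_self, lp.single_apply_ne _ _ _ (by simp)]
          positivity
      refine ⟨_, (lp_cont (is i : NS tg)).continuousAt.eventually_ne hne, ?_⟩
      intro x hx
      have hx : (emb x : lp (fun _ : NS tg => ℝ) 2) (is i) ≠ 0 := hx
      have : x = is i := by
        by_contra hxi
        refine hx ?_
        rcases x with i' | j'
        · have h1 : (is i : NS tg) ≠ is i' := fun h => hxi h.symm
          simp only [emb]
          split
          · rw [lp.single_apply_ne _ _ _ h1]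
          · rw [lp.coeFn_add, Pi.add_apply, lp.single_apply_ne _ _ _ h1,
              lp.single_apply_ne _ _ _ (by simp), add_zero]
        · simp only [emb]
          rw [lp.single_apply_ne _ _ _ (by simp)]
      rw [this]
      exact mem_of_mem_nhds hU
    · obtain ⟨hjU, n0, h0⟩ := mem_nhds_q.1 hU
      have hqq : (emb (q j : NS tg) : lp (fun _ : NS tg => ℝ) 2) (q j) ≠ 0 := by
        simp only [emb]
        rw [lp.single_apply_self]; norm_num
      have e1 := (lp_cont (q j : NS tg)).continuousAt.eventually_ne hqq
      have hpos : (0 : ℝ) < 1 / ((n0 : ℝ) + 1) := by positivity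
      refine ⟨_, e1.and (Metric.ball_mem_nhds _ hpos), ?_⟩
      rintro (i | j') ⟨hx1, hx2⟩
      · rcases hi : tg i with _ | ⟨j', n⟩
        · refine absurd ?_ hx1
          simp only [emb, hi]
          rw [lp.single_apply_ne _ _ _ (by simp)]
        · by_cases hjj : j' = j
          · subst hjj
            refine h0 i n hi ?_
            simp only [emb, hi, dist_eq_norm, add_sub_cancel_left] at hx2
            rw [lp.norm_single (by norm_num), Real.norm_eq_abs, abs_of_nonneg (by positivity)] at hx2
            rw [one_div_lt_one_div (by positivity) (by positivity)] at hx2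
            have : (n0 : ℝ) < n := by linarith
            exact_mod_cast this.le
          · refine absurd ?_ hx1
            simp only [emb, hi]
            rw [lp.coeFn_add, Pi.add_apply, lp.single_apply_ne _ _ _ (by simpa using Ne.symm hjj),
              lp.single_apply_ne _ _ _ (by simp), add_zero]
      · by_cases hjj : j' = j
        · subst hjj
          exact hjU
        · refine absurd ?_ hx1
          simp only [emb]
          rw [lp.single_apply_ne _ _ _ (by simpa using Ne.symm hjj)]

/-- shift maps -/
def sh (g : I → I) : NS tg → NS tg
  | is i => is (g i)
  | q j => q (j + 1)

theorem sh_embedding (g : I → I) (hg : Function.Injective g)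
    (ht : ∀ i, tg (g i) = (tg i).map (fun p => (p.1 + 1, p.2 + 1))) :
    IsEmbedding (sh g : NS tg → NS tg) := by
  have hinj : Function.Injective (sh g : NS tg → NS tg) := by
    rintro (i | j) (i' | j') h
    · simp only [sh, is.injEq] at h
      rw [hg h]
    · cases h
    · cases h
    · simp only [sh, q.injEq] at h
      have : j = j' := by omega
      rw [this]
  refine ⟨isInducing_iff_nhds.2 fun x => ?_, hinj⟩
  ext U
  rw [mem_comap]
  rcases x with i | j
  · rw [mem_nhds_is]
    constructor
    · intro hU
      refine ⟨{is (g i)}, mem_nhds_is.2 rfl, ?_⟩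
      intro x hx
      have : x = is i := hinj hx
      rw [this]
      exact hU
    · rintro ⟨V, hV, hVU⟩
      have hV' := mem_of_mem_nhds hV
      exact hVU hV'
  · rw [mem_nhds_q]
    constructor
    · rintro ⟨hj, n0, h0⟩
      refine ⟨sh g '' U ∪ (range (sh g))ᶜ, mem_nhds_q.2 ⟨Or.inl ⟨_, hj, rfl⟩, n0 + 1, ?_⟩, ?_⟩
      · intro i n hi hn
        by_cases hr : (is i : NS tg) ∈ range (sh g)
        · left
          obtain ⟨x, hx⟩ := hr
          rcases x with i' | j'
          · simp only [sh, is.injEq] at hx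
            subst hx
            rw [ht] at hi
            rcases h' : tg i' with _ | ⟨j', n'⟩
            · rw [h'] at hi; cases hi
            · rw [h'] at hi
              simp only [Option.map_some, Option.some.injEq, Prod.mk.injEq] at hi
              refine ⟨is i', h0 i' n' ?_ (by omega), rfl⟩
              rw [h']
              have : j' = j := by omega
              rw [this]
          · cases hx
        · exact Or.inr hr
      · rintro x (⟨y, hy, hxy⟩ | hx)
        · rw [← hinj hxy]; exact hy
        · exact (hx ⟨x, rfl⟩).elim
    · rintro ⟨V, hV, hVU⟩
      obtain ⟨hj, n0, h0⟩ := mem_nhds_q.1 hV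
      refine ⟨hVU hj, n0, fun i n hi hn => hVU ?_⟩
      refine h0 (g i) (n + 1) ?_ (by omega)
      rw [ht, hi]
      rfl

theorem sh_range_closed (g : I → I) : IsClosed (range (sh g : NS tg → NS tg)) :=
  isClosed_of_all_q fun j => ⟨q (j - 1), by simp [sh]⟩

theorem sh_range_open (g : I → I) (n0 : ℕ) (h : ∀ i j n, tg i = some (j, n) → n0 ≤ n → i ∈ range g) :
    IsOpen (range (sh g : NS tg → NS tg)) := by
  intro j _
  refine ⟨n0, fun i n hi hn => ?_⟩
  obtain ⟨i', rfl⟩ := h i j n hi hn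
  exact ⟨is i', rfl⟩

end NS

end NSpace


section Conc

open Set Filter Topology

universe v

theorem shift_zero (σ : ℕ → ℕ) (hσ : Function.Bijective σ) (k : ℤ) (n0 : ℕ)
    (h : ∀ n ≥ n0, (σ n : ℤ) = n + k) : k = 0 := by
  obtain ⟨N, hN0, hNk⟩ : ∃ N : ℕ, n0 ≤ N ∧ 0 ≤ (N : ℤ) + k := ⟨n0 + k.natAbs, by omega, by omega⟩
  obtain ⟨N', hN'⟩ := Int.eq_ofNat_of_zero_le hNk
  have himg : (Finset.range N).image σ = Finset.range N' := by
    ext m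
    simp only [Finset.mem_image, Finset.mem_range]
    constructor
    · rintro ⟨n, hn, rfl⟩
      by_contra hlt
      have h1 : 0 ≤ (σ n : ℤ) - k := by omega
      obtain ⟨n', hn'⟩ := Int.eq_ofNat_of_zero_le h1
      have h2 := h n' (by omega)
      have h3 : σ n' = σ n := by omega
      have h4 := hσ.1 h3
      omega
    · intro hm
      obtain ⟨n, rfl⟩ := hσ.2 m
      refine ⟨n, ?_, rfl⟩
      by_contra hlt
      have := h n (by omega)
      omega
  have hc := congrArg Finset.card himg
  rw [Finset.card_image_of_injective _ hσ.1, Finset.card_range, Finset.card_range] at hc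
  omega

theorem shift_rel (R : ℕ → ℕ → Prop) (d d' : ℕ) (h1 : ∀ n ≥ d, ∃ m ≥ d', R n m)
    (h2 : ∀ m ≥ d', ∃ n ≥ d, R n m) (h3 : ∀ n m m', R n m → R n m' → m = m')
    (h4 : ∀ n n' m, R n m → R n' m → n = n') (i : ℤ) (n0 : ℕ)
    (h : ∀ n ≥ n0, ∀ m, R n m → (m : ℤ) = n + i) : i = (d' : ℤ) - d := by
  choose s hs hR using fun n : ℕ => h1 (n + d) (by omega)
  have := shift_zero (fun n => s n - d') ⟨?_, ?_⟩ (i + d - d') n0 ?_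
  · omega
  · intro n n' hn
    have hn : s n - d' = s n' - d' := hn
    have e : s n = s n' := by
      have := hs n
      have := hs n'
      omega
    have r1 := hR n
    rw [e] at r1
    have := h4 _ _ _ r1 (hR n')
    omega
  · intro m
    obtain ⟨n, hn, hr⟩ := h2 (m + d') (by omega)
    refine ⟨n - d, ?_⟩
    have r1 := hR (n - d)
    rw [Nat.sub_add_cancel hn] at r1
    have := h3 _ _ _ hr r1
    show s (n - d) - d' = m
    omega
  · intro n hn
    have := h (n + d) (by omega) _ (hR n)
    have := hs n
    show ((s n - d' : ℕ) : ℤ) = _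
    omega

/-- component labels -/
inductive Lam (J : Type v) : Type v
  | Y (i : J) : Lam J
  | W (i : J) (n : ℕ) : Lam J
  | M (c : J) (n : ℕ) : Lam J

variable {J : Type v} [LinearOrder J]

/-- mark and flag of a component -/
def lab (a b : J → J) : Lam J → J × Bool
  | Lam.Y i => (a i, false)
  | Lam.W i _ => (a i, true)
  | Lam.M c _ => (b c, false)

open Classical in
/-- limit data -/
noncomputable def tgJ (J : Type v) [LinearOrder J] [OrderTop J] : Lam J × GV J → Option (ℤ × ℕ)
  | (Lam.M _ n, Sum.inl x) => if x.1 = ⊤ ∧ x.2 % 2 = 1 then some ((n : ℤ) - (x.2 / 2 : ℕ), n) else none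
  | _ => none

variable [OrderTop J]

theorem tgJ_some {l : Lam J} {u : GV J} {j : ℤ} {n : ℕ} (h : tgJ J (l, u) = some (j, n)) :
    ∃ (c : J) (s : ℕ), l = Lam.M c n ∧ u = Sum.inl (⊤, 2 * s + 1) ∧ j = n - s := by
  rcases l with i | ⟨i, n⟩ | ⟨c, n⟩ <;> rcases u with ⟨x, m⟩ | e <;> simp only [tgJ] at h
  all_goals try cases h
  split_ifs at h with hh
  obtain ⟨hx, hm⟩ := hh
  simp only [Option.some.injEq, Prod.mk.injEq] at h
  obtain ⟨h1, rfl⟩ := h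
  subst hx
  refine ⟨c, m / 2, rfl, ?_, h1.symm⟩
  have : 2 * (m / 2) + 1 = m := by omega
  rw [this]

theorem tgJ_M (c : J) (n s : ℕ) :
    tgJ J (Lam.M c n, Sum.inl (⊤, 2 * s + 1)) = some ((n : ℤ) - s, n) := by
  have h1 : (2 * s + 1) % 2 = 1 := by omega
  have h2 : (2 * s + 1) / 2 = s := by omega
  simp only [tgJ, h1, h2]
  simp

/-- adjacency on the vertex space -/
def ra (a b : J → J) : NS (tgJ J) → NS (tgJ J) → Prop
  | NS.is x, NS.is y => x.1 = y.1 ∧ GA (lab a b x.1).1 (lab a b x.1).2 x.2 y.2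
  | _, _ => False

variable {a b : J → J}

theorem ra_symm (x y : NS (tgJ J)) (h : ra a b x y) : ra a b y x := by
  rcases x with ⟨l, u⟩ | j <;> rcases y with ⟨l', u'⟩ | j'
  · obtain ⟨h1, h2⟩ := h
    simp only at h1 h2
    subst h1
    exact ⟨rfl, GA_symm _ _ _ _ h2⟩
  all_goals exact h.elim

theorem ra_ne {x y : NS (tgJ J)} (h : ra a b x y) : x ≠ y := by
  rintro rfl
  rcases x with ⟨l, u⟩ | j
  · exact GA_irrefl _ _ _ h.2
  · exact h

theorem GA_odd (i : J) (f : Bool) (s s' : ℕ) :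
    ¬ GA i f (Sum.inl (⊤, 2 * s + 1)) (Sum.inl (⊤, 2 * s' + 1)) := by
  simp only [GA]
  rintro (h | h | h) <;> omega

theorem ra_of_lim {x y : NS (tgJ J)}
    (h : ∀ O ∈ 𝓝 x, ∀ O' ∈ 𝓝 y, ∃ u ∈ O, ∃ w ∈ O', ra a b u w) : ra a b x y := by
  have key : ∀ (i : Lam J × GV J) (j : ℤ),
      ¬ ∀ O ∈ 𝓝 (NS.is i : NS (tgJ J)), ∀ O' ∈ 𝓝 (NS.q j : NS (tgJ J)), ∃ u ∈ O, ∃ w ∈ O', ra a b u w := by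
    rintro ⟨l, u⟩ j h
    obtain ⟨n1, hn1⟩ : ∃ n1, ∀ c n, l = Lam.M c n → n < n1 := by
      rcases l with i | ⟨i, n⟩ | ⟨c, n⟩
      · exact ⟨0, fun _ _ h => by cases h⟩
      · exact ⟨0, fun _ _ h => by cases h⟩
      · exact ⟨n + 1, fun _ _ h => by cases h; omega⟩
    obtain ⟨x, hx, w, hw, hr⟩ := h {NS.is (l, u)} (NS.mem_nhds_is.2 rfl)
      {x | x = NS.q j ∨ ∃ i n, tgJ J i = some (j, n) ∧ n1 ≤ n ∧ x = NS.is i}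
      (NS.mem_nhds_q.2 ⟨Or.inl rfl, n1, fun i n hi hn => Or.inr ⟨i, n, hi, hn, rfl⟩⟩)
    cases hx
    rcases hw with rfl | ⟨⟨l', u'⟩, n, hi, hn, rfl⟩
    · exact hr
    · obtain ⟨c, s, rfl, rfl, -⟩ := tgJ_some hi
      have := hn1 c n hr.1
      omega
  rcases x with i | j <;> rcases y with i' | j'
  · obtain ⟨u, hu, w, hw, hr⟩ := h {NS.is i} (NS.mem_nhds_is.2 rfl) {NS.is i'} (NS.mem_nhds_is.2 rfl)
    cases hu
    cases hw
    exact hr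
  · exact (key _ _ h).elim
  · refine (key i' j fun O hO O' hO' => ?_).elim
    obtain ⟨u, hu, w, hw, hr⟩ := h O' hO' O hO
    exact ⟨w, hw, u, hu, ra_symm _ _ hr⟩
  · obtain ⟨u, hu, w, hw, hr⟩ := h _ ((NS.isClopen_cl j).2.mem_nhds rfl) _
      ((NS.isClopen_cl j').2.mem_nhds rfl)
    rcases u with ⟨l, u⟩ | u
    swap
    · exact hr.elim
    rcases w with ⟨l', w⟩ | w
    swap
    · exact hr.elim
    obtain ⟨n, hn⟩ := hu
    obtain ⟨n', hn'⟩ := hw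
    obtain ⟨c, s, rfl, rfl, -⟩ := tgJ_some hn
    obtain ⟨c', s', rfl, rfl, -⟩ := tgJ_some hn'
    exact (GA_odd _ _ _ _ hr.2).elim

/-- the space -/
abbrev XX (a b : J → J) := Pt (ra a b)

/-- vertices -/
abbrev VV (a b : J → J) (l : Lam J) (u : GV J) : XX a b := Pt.vx (NS.is (l, u))

theorem VV_inj {l l' : Lam J} {u u' : GV J} (h : VV a b l u = VV a b l' u') : l = l' ∧ u = u' := by
  simpa [VV] using h

theorem VV_tadj {l : Lam J} {u w : GV J} (h : GA (lab a b l).1 (lab a b l).2 u w) :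
    TAdj (VV a b l u) (VV a b l w) := by
  have hr : ra a b (NS.is (l, u)) (NS.is (l, w)) := ⟨rfl, h⟩
  exact Pt.tadj_of_r hr (ra_ne hr)

theorem tadj_VV {x y : XX a b} (h : TAdj x y) :
    ∃ l u w, x = VV a b l u ∧ y = VV a b l w ∧ GA (lab a b l).1 (lab a b l).2 u w := by
  obtain ⟨n, m, rfl, rfl, hl⟩ := Pt.limadj_of_tadj ra_symm h
  have hr := ra_of_lim hl
  rcases n with ⟨l, u⟩ | j <;> rcases m with ⟨l', u'⟩ | j'
  · obtain ⟨h1, h2⟩ := hr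
    simp only at h1 h2
    subst h1
    exact ⟨l, u, u', rfl, rfl, h2⟩
  all_goals exact hr.elim

theorem GA_conn (i : J) (f : Bool) (P : GV J → Prop) (hP : ∀ u w, GA i f u w → P u → P w)
    (u0 : GV J) (h0 : P u0) : ∀ u, P u := by
  have hc : ∃ c, P (Sum.inr c) := by
    rcases u0 with ⟨j, m⟩ | c
    · by_cases hm : m = 0
      · exact ⟨0, hP _ _ (by simp [GA, GS, hm]) h0⟩
      · exact ⟨5, hP _ _ (by simp [GA, GS, hm]) h0⟩
    · exact ⟨c, h0⟩
  obtain ⟨c, hc⟩ := hc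
  have hall : ∀ d, P (Sum.inr d) := by
    intro d
    by_cases h : c = d
    · rw [← h]; exact hc
    · exact hP (Sum.inr c) _ h hc
  rintro (⟨j, m⟩ | d)
  · by_cases hm : m = 0
    · exact hP (Sum.inr 0) _ (by simp [GA, GS, hm]) (hall _)
    · exact hP (Sum.inr 5) _ (by simp [GA, GS, hm]) (hall _)
  · exact hall d

theorem GA_nbr (i : J) (f : Bool) (u : GV J) : ∃ w, GA i f u w := by
  rcases u with ⟨j, m⟩ | c
  · by_cases hm : m = 0
    · exact ⟨Sum.inr 0, by simp [GA, GS, hm]⟩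
    · exact ⟨Sum.inr 5, by simp [GA, GS, hm]⟩
  · by_cases h : c = 0
    · exact ⟨Sum.inr 1, by rw [h]; simp [GA]⟩
    · exact ⟨Sum.inr 0, h⟩

theorem key_lemma [WellFoundedLT J] [Nontrivial J] {D : Set (XX a b)} (hD : IsClopen D)
    (f : D → XX a b) (hf : Continuous f) (hi : Function.Injective f) {l : Lam J} {u0 : GV J}
    (h0 : VV a b l u0 ∈ D) : ∃ l', (lab a b l).1 = (lab a b l').1 ∧
      ((lab a b l).2 = true → (lab a b l').2 = true) ∧
      ∀ x : J × ℕ, ∃ hx : VV a b l (Sum.inl x) ∈ D,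
        f ⟨VV a b l (Sum.inl x), hx⟩ = VV a b l' (Sum.inl x) := by
  have step : ∀ u w (hu : VV a b l u ∈ D), GA (lab a b l).1 (lab a b l).2 u w →
      ∃ hw : VV a b l w ∈ D, ∃ l' u' w', f ⟨_, hu⟩ = VV a b l' u' ∧ f ⟨_, hw⟩ = VV a b l' w' ∧
        GA (lab a b l').1 (lab a b l').2 u' w' := by
    intro u w hu h
    obtain ⟨hw, ht⟩ := (VV_tadj h).restrict hD hu
    exact ⟨hw, tadj_VV (ht.map hf hi)⟩
  obtain ⟨w0, hw0⟩ := GA_nbr (lab a b l).1 (lab a b l).2 u0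
  obtain ⟨-, l', u0', -, hu0', -, -⟩ := step u0 w0 h0 hw0
  have hall : ∀ u, ∃ hu : VV a b l u ∈ D, ∃ u', f ⟨_, hu⟩ = VV a b l' u' := by
    refine GA_conn (lab a b l).1 (lab a b l).2 _ ?_ u0 ⟨h0, u0', hu0'⟩
    rintro u w h ⟨hu, u', hu'⟩
    obtain ⟨hw, l'', u'', w'', h1, h2, -⟩ := step u w hu h
    rw [hu'] at h1
    obtain ⟨rfl, rfl⟩ := VV_inj h1
    exact ⟨hw, w'', h2⟩
  choose hmem F hF using hall
  have hFinj : Function.Injective F := by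
    intro u w h
    have : f ⟨_, hmem u⟩ = f ⟨_, hmem w⟩ := by rw [hF, hF, h]
    have := congrArg Subtype.val (hi this)
    exact (VV_inj this).2
  obtain ⟨h1, h2, h3⟩ := rigid_graph (i := (lab a b l).1) (i' := (lab a b l').1)
    (b := (lab a b l).2) (b' := (lab a b l').2) F hFinj (by
      intro u w h
      obtain ⟨hw, l'', u'', w'', h1, h2, h3⟩ := step u w (hmem u) h
      rw [hF] at h1 h2
      obtain ⟨rfl, rfl⟩ := VV_inj h1
      obtain ⟨-, rfl⟩ := VV_inj h2
      exact h3)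
  exact ⟨l', h1, h2, fun x => ⟨hmem _, by rw [hF, h3]⟩⟩

/-- vertices over a set of labels -/
def SS (A : Set (Lam J)) : Set (NS (tgJ J))
  | NS.is x => x.1 ∈ A
  | NS.q _ => True

/-- part of the space over a set of labels -/
def DD (a b : J → J) (A : Set (Lam J)) : Set (XX a b) := Pt.hat (ra a b) (SS A)

theorem DD_clopen {A : Set (Lam J)} (hA : ∀ c n, 1 ≤ n → Lam.M c n ∈ A) : IsClopen (DD a b A) := by
  refine Pt.isClopen_hat ⟨NS.isClosed_of_all_q fun j => trivial, ?_⟩ ?_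
  · intro j _
    refine ⟨1, ?_⟩
    rintro ⟨l, u⟩ n hi hn
    obtain ⟨c, s, rfl, -, -⟩ := tgJ_some hi
    exact hA c n hn
  · rintro (⟨l, u⟩ | j) (⟨l', u'⟩ | j') h
    · obtain ⟨h1, -⟩ := h
      simp only at h1
      subst h1
      exact Iff.rfl
    all_goals exact h.elim

section Shift

variable (ψ : Lam J → Lam J)

/-- the shift map on indices -/
def gsh (x : Lam J × GV J) : Lam J × GV J := (ψ x.1, x.2)

theorem gsh_inj (hψ : Function.Injective ψ) : Function.Injective (gsh ψ) := by
  rintro ⟨l, u⟩ ⟨l', u'⟩ h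
  simp only [gsh, Prod.mk.injEq] at h
  rw [hψ h.1, h.2]

theorem gsh_tg (hM : ∀ c n, ψ (Lam.M c n) = Lam.M c (n + 1))
    (hn : ∀ l, (∀ c n, l ≠ Lam.M c n) → ∀ c n, ψ l ≠ Lam.M c n) (x : Lam J × GV J) :
    tgJ J (gsh ψ x) = (tgJ J x).map (fun p => (p.1 + 1, p.2 + 1)) := by
  obtain ⟨l, u⟩ := x
  by_cases hl : ∃ c n, l = Lam.M c n
  · obtain ⟨c, n, rfl⟩ := hl
    simp only [gsh, hM]
    rcases u with ⟨x, m⟩ | e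
    · simp only [tgJ]
      split_ifs
      · simp only [Option.map_some, Option.some.injEq, Prod.mk.injEq, and_true]
        push_cast
        ring
      · rfl
    · rfl
  · push Not at hl
    have h2 := hn l hl
    have aux : ∀ l' : Lam J, (∀ c n, l' ≠ Lam.M c n) → tgJ J (l', u) = none := by
      intro l' hl'
      rcases h : tgJ J (l', u) with _ | ⟨j, n⟩
      · rfl
      · obtain ⟨c, s, h, -, -⟩ := tgJ_some h
        exact (hl' _ _ h).elim
    simp only [gsh]
    rw [aux _ hl, aux _ h2]
    rfl

theorem gsh_hom (hh : ∀ l u w, GA (lab a b l).1 (lab a b l).2 u w →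
      GA (lab a b (ψ l)).1 (lab a b (ψ l)).2 u w) (x y : NS (tgJ J)) (h : ra a b x y) :
    ra a b (NS.sh (gsh ψ) x) (NS.sh (gsh ψ) y) := by
  rcases x with ⟨l, u⟩ | j <;> rcases y with ⟨l', u'⟩ | j'
  · obtain ⟨h1, h2⟩ := h
    simp only at h1 h2
    subst h1
    exact ⟨rfl, hh _ _ _ h2⟩
  all_goals exact h.elim

theorem DD_maps {A A' : Set (Lam J)} (hA : ∀ l ∈ A, ψ l ∈ A')
    (hh : ∀ x y, ra a b x y → ra a b (NS.sh (gsh ψ) x) (NS.sh (gsh ψ) y)) :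
    Set.MapsTo (Pt.map (NS.sh (gsh ψ)) hh) (DD a b A) (DD a b A') := by
  have key : ∀ x : NS (tgJ J), x ∈ SS A → NS.sh (gsh ψ) x ∈ SS A' := by
    rintro (⟨l, u⟩ | j) hx
    · exact hA _ hx
    · trivial
  rintro (n | ⟨u, w, k, t, h, ht⟩) hx
  · exact key _ hx
  · exact key _ hx

end Shift

end Conc

section Final

open Set Filter Topology

theorem homeoClosed {X : Type*} [TopologicalSpace X] {F : X → X} (hF : IsEmbedding F) {D D' : Set X}
    (hm : MapsTo F D D') (hc : IsClosed (F '' D)) : HomeoToClosedSubset D D' := by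
  let g : D → D' := fun x => ⟨F x.1, hm x.2⟩
  have hg : IsEmbedding g := by
    refine IsEmbedding.of_comp (hF.continuous.comp continuous_subtype_val |>.subtype_mk _)
      continuous_subtype_val ?_
    exact hF.comp IsEmbedding.subtypeVal
  refine ⟨range g, ?_, ⟨hg.toHomeomorph⟩⟩
  have : range g = Subtype.val ⁻¹' (F '' D) := by
    ext ⟨y, hy⟩
    constructor
    · rintro ⟨x, hx⟩
      exact ⟨x.1, x.2, congrArg Subtype.val hx⟩
    · rintro ⟨x, hx, hxy⟩
      exact ⟨⟨x, hx⟩, Subtype.ext hxy⟩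
  rw [this]
  exact hc.preimage continuous_subtype_val

theorem homeoClopen {X : Type*} [TopologicalSpace X] {F : X → X} (hF : IsEmbedding F) {D D' : Set X}
    (hm : MapsTo F D D') (hc : IsClopen (F '' D)) : HomeoToClopenSubset D D' := by
  let g : D → D' := fun x => ⟨F x.1, hm x.2⟩
  have hg : IsEmbedding g := by
    refine IsEmbedding.of_comp (hF.continuous.comp continuous_subtype_val |>.subtype_mk _)
      continuous_subtype_val ?_
    exact hF.comp IsEmbedding.subtypeVal
  refine ⟨range g, ?_, ⟨hg.toHomeomorph⟩⟩
  have : range g = Subtype.val ⁻¹' (F '' D) := by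
    ext ⟨y, hy⟩
    constructor
    · rintro ⟨x, hx⟩
      exact ⟨x.1, x.2, congrArg Subtype.val hx⟩
    · rintro ⟨x, hx, hxy⟩
      exact ⟨⟨x, hx⟩, Subtype.ext hxy⟩
  rw [this]
  exact hc.preimage continuous_subtype_val

variable {J : Type u} [LinearOrder J] [OrderTop J] {a b : J → J}

theorem homeo_lab [WellFoundedLT J] [Nontrivial J] {D T : Set (XX a b)} (hD : IsClopen D)
    (hT : IsClopen T) (H : D ≃ₜ T) {l : Lam J} {u0 : GV J} (h0 : VV a b l u0 ∈ D) :
    ∃ l', lab a b l = lab a b l' ∧ ∀ x : J × ℕ, ∃ hx : VV a b l (Sum.inl x) ∈ D,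
        (H ⟨VV a b l (Sum.inl x), hx⟩).1 = VV a b l' (Sum.inl x) := by
  obtain ⟨l', h1, h2, h3⟩ := key_lemma hD (fun x => (H x).1) (continuous_subtype_val.comp H.continuous)
    (Subtype.val_injective.comp H.injective) h0
  let x0 : J × ℕ := (⊤, 0)
  obtain ⟨hx0, hx0'⟩ := h3 x0
  have hmem : VV a b l' (Sum.inl x0) ∈ T := by rw [← hx0']; exact (H _).2
  obtain ⟨l'', h1', h2', h3'⟩ := key_lemma hT (fun x => (H.symm x).1)
    (continuous_subtype_val.comp H.symm.continuous)
    (Subtype.val_injective.comp H.symm.injective) hmem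
  obtain ⟨hy0, hy0'⟩ := h3' x0
  have e : H ⟨_, hx0⟩ = ⟨_, hy0⟩ := Subtype.ext hx0'
  have e2 : H.symm ⟨_, hy0⟩ = ⟨_, hx0⟩ := by rw [← e, H.symm_apply_apply]
  simp only [e2] at hy0'
  obtain ⟨rfl, -⟩ := VV_inj hy0'
  refine ⟨l', Prod.ext h1 ?_, h3⟩
  rcases h : (lab a b l).2 with _ | _
  · rcases h' : (lab a b l').2 with _ | _
    · rfl
    · rw [h2' h'] at h; cases h
  · exact (h2 h).symm

theorem lab_M (hb : Function.Injective b) (hab : ∀ i j, a i ≠ b j)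
    {c : J} {n : ℕ} {l : Lam J} (h : lab a b (Lam.M c n) = lab a b l) : ∃ m, l = Lam.M c m := by
  rcases l with i | ⟨i, m⟩ | ⟨c', m⟩
  · exact (hab i c (congrArg Prod.fst h).symm).elim
  · exact (hab i c (congrArg Prod.fst h).symm).elim
  · have := hb (congrArg Prod.fst h)
    subst this
    exact ⟨m, rfl⟩

/-- correspondence of components -/
def RR {A A' : Set (Lam J)} (f : DD a b A ≃ₜ DD a b A') (c : J) (n m : ℕ) : Prop :=
  ∀ x : J × ℕ, ∃ hx : VV a b (Lam.M c n) (Sum.inl x) ∈ DD a b A,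
    (f ⟨VV a b (Lam.M c n) (Sum.inl x), hx⟩).1 = VV a b (Lam.M c m) (Sum.inl x)

theorem RR_symm {A A' : Set (Lam J)} {f : DD a b A ≃ₜ DD a b A'} {c : J} {n m : ℕ} (h : RR f c n m) :
    RR f.symm c m n := by
  intro x
  obtain ⟨hx, e⟩ := h x
  have hmem : VV a b (Lam.M c m) (Sum.inl x) ∈ DD a b A' := by rw [← e]; exact (f _).2
  refine ⟨hmem, ?_⟩
  have : (⟨_, hmem⟩ : DD a b A') = f ⟨_, hx⟩ := Subtype.ext e.symm
  rw [this, f.symm_apply_apply]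

theorem RR_mem {A A' : Set (Lam J)} {f : DD a b A ≃ₜ DD a b A'} {c : J} {n m : ℕ} (h : RR f c n m) :
    Lam.M c n ∈ A := (h (⊤, 0)).1

theorem RR_fun {A A' : Set (Lam J)} {f : DD a b A ≃ₜ DD a b A'} {c : J} {n m m' : ℕ} (h : RR f c n m)
    (h' : RR f c n m') : m = m' := by
  obtain ⟨hx, e⟩ := h (⊤, 0)
  obtain ⟨hx', e'⟩ := h' (⊤, 0)
  have := VV_inj (e.symm.trans e')
  simpa using this.1

theorem RR_ex [WellFoundedLT J] [Nontrivial J] (hb : Function.Injective b) (hab : ∀ i j, a i ≠ b j)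
    {A A' : Set (Lam J)} (hA : ∀ c n, 1 ≤ n → Lam.M c n ∈ A)
    (hA' : ∀ c n, 1 ≤ n → Lam.M c n ∈ A') (f : DD a b A ≃ₜ DD a b A') {c : J} {n : ℕ}
    (hn : Lam.M c n ∈ A) : ∃ m, RR f c n m := by
  obtain ⟨l', h1, h2⟩ := homeo_lab (DD_clopen hA) (DD_clopen hA') f
    (show VV a b (Lam.M c n) (Sum.inr 0) ∈ DD a b A from hn)
  obtain ⟨m, rfl⟩ := lab_M hb hab h1
  exact ⟨m, h2⟩

theorem RR_shift [WellFoundedLT J] [Nontrivial J] (hb : Function.Injective b)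
    (hab : ∀ i j, a i ≠ b j) {A A' : Set (Lam J)} (hA : ∀ c n, 1 ≤ n → Lam.M c n ∈ A)
    (hA' : ∀ c n, 1 ≤ n → Lam.M c n ∈ A') (f : DD a b A ≃ₜ DD a b A') :
    ∃ (i : ℤ) (n0 : ℕ), ∀ n ≥ n0, ∀ c m, RR f c n m → (m : ℤ) = n + i := by
  have hq : (Pt.vx (NS.q 0) : XX a b) ∈ DD a b A := trivial
  have key : ∀ O ∈ 𝓝 (f ⟨_, hq⟩).1, ∃ n0 : ℕ, ∀ n ≥ n0, ∀ c m, RR f c n m →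
      VV a b (Lam.M c m) (Sum.inl (⊤, 2 * n + 1)) ∈ O := by
    intro O hO
    have hc : Continuous fun x => (f x).1 := continuous_subtype_val.comp f.continuous
    have h1 : (fun x => (f x).1) ⁻¹' O ∈ 𝓝 (⟨_, hq⟩ : DD a b A) := hc.continuousAt hO
    rw [nhds_subtype, mem_comap] at h1
    obtain ⟨U, hU, hUO⟩ := h1
    obtain ⟨O1, hO1, ε, hε, hB⟩ := Pt.mem_nhds_vx.1 hU
    obtain ⟨-, n0, hn0⟩ := NS.mem_nhds_q.1 hO1
    refine ⟨n0, fun n hn c m hR => ?_⟩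
    obtain ⟨hx, e⟩ := hR (⊤, 2 * n + 1)
    rw [← e]
    refine hUO (hB ?_)
    refine hn0 _ n ?_ hn
    rw [tgJ_M]
    simp
  have hex : ∀ n, 1 ≤ n → ∃ m, RR f ⊤ n m := fun n hn => RR_ex hb hab hA hA' f (hA _ n hn)
  rcases hz : (f ⟨_, hq⟩).1 with (i | i) | ⟨u, w, k, t, h, ht⟩
  · exfalso
    rw [hz] at key
    obtain ⟨n0, hn0⟩ := key _ (Pt.B_mem_nhds (NS.mem_nhds_is.2 (mem_singleton _)) one_pos)
    obtain ⟨m1, hm1⟩ := hex (n0 + 1) (by omega)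
    obtain ⟨m2, hm2⟩ := hex (n0 + 2) (by omega)
    have e1 := hn0 _ (by omega) _ _ hm1
    have e2 := hn0 _ (by omega) _ _ hm2
    have e1 : (NS.is (Lam.M ⊤ m1, Sum.inl (⊤, 2 * (n0 + 1) + 1)) : NS (tgJ J)) = NS.is i := e1
    have e2 : (NS.is (Lam.M ⊤ m2, Sum.inl (⊤, 2 * (n0 + 2) + 1)) : NS (tgJ J)) = NS.is i := e2
    have := e1.trans e2.symm
    simp at this
  · rw [hz] at key
    obtain ⟨n0, hn0⟩ := key _ (Pt.B_mem_nhds ((NS.isClopen_cl i).2.mem_nhds rfl) one_pos)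
    refine ⟨i, n0, fun n hn c m hR => ?_⟩
    obtain ⟨n', hn'⟩ : ∃ n', tgJ J (Lam.M c m, Sum.inl (⊤, 2 * n + 1)) = some (i, n') := hn0 n hn c m hR
    rw [tgJ_M] at hn'
    simp only [Option.some.injEq, Prod.mk.injEq] at hn'
    omega
  · exfalso
    rw [hz] at key
    obtain ⟨n0, hn0⟩ := key _ ((Pt.isClopen_arc (u, w, k)).2.mem_nhds rfl)
    obtain ⟨m1, hm1⟩ := hex (n0 + 1) (by omega)
    exact hn0 _ (by omega) _ _ hm1

/-- labels used for an element -/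
def AA {Q : Type u} (le1 le2 : Q → Q → Prop) (e : Q → J) (q : Q) : Set (Lam J)
  | Lam.Y i => ∃ p, e p = i ∧ le1 p q
  | Lam.W i _ => ∃ p, e p = i ∧ le2 p q
  | Lam.M c n => ¬ (c = e q ∧ n = 0)

theorem AA_M {Q : Type u} (le1 le2 : Q → Q → Prop) (e : Q → J) (q : Q) (c : J) (n : ℕ) (hn : 1 ≤ n) :
    Lam.M c n ∈ AA le1 le2 e q := by
  rintro ⟨-, h⟩
  omega

theorem nonhomeo [WellFoundedLT J] [Nontrivial J] (hb : Function.Injective b)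
    (hab : ∀ i j, a i ≠ b j) {Q : Type u} (le1 le2 : Q → Q → Prop) (e : Q → J)
    (he : Function.Injective e) (q q' : Q) (hne : q ≠ q') :
    IsEmpty (DD a b (AA le1 le2 e q) ≃ₜ DD a b (AA le1 le2 e q')) := by
  refine ⟨fun f => ?_⟩
  have hA := AA_M le1 le2 e q
  have hA' := AA_M le1 le2 e q'
  have hee : e q ≠ e q' := fun h => hne (he h)
  obtain ⟨i, n0, hi⟩ := RR_shift hb hab hA hA' f
  have main : ∀ c d d', (∀ n, Lam.M c n ∈ AA le1 le2 e q ↔ d ≤ n) →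
      (∀ n, Lam.M c n ∈ AA le1 le2 e q' ↔ d' ≤ n) → i = (d' : ℤ) - d := by
    intro c d d' hd hd'
    refine shift_rel (RR f c) d d' ?_ ?_ (fun n m m' => RR_fun)
      (fun n n' m h h' => RR_fun (RR_symm h) (RR_symm h')) i n0 (fun n hn m h => hi n hn c m h)
    · intro n hn
      obtain ⟨m, hm⟩ := RR_ex hb hab hA hA' f ((hd n).2 hn)
      exact ⟨m, (hd' m).1 (RR_mem (RR_symm hm)), hm⟩
    · intro m hm
      obtain ⟨n, hn⟩ := RR_ex hb hab hA' hA f.symm ((hd' m).2 hm)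
      have hn' : RR f c n m := RR_symm hn
      exact ⟨n, (hd n).1 (RR_mem hn'), hn'⟩
  have m1 := main (e q) 1 0 (fun n => by
      show ¬ (e q = e q ∧ n = 0) ↔ _
      simp; omega) (fun n => by
      show ¬ (e q = e q' ∧ n = 0) ↔ _
      simp [hee])
  have m2 := main (e q') 0 1 (fun n => by
      show ¬ (e q' = e q ∧ n = 0) ↔ _
      simp [hee.symm]) (fun n => by
      show ¬ (e q' = e q' ∧ n = 0) ↔ _
      simp; omega)
  simp at m1 m2
  omega

/-- first shift -/
def psi1 : Lam J → Lam J
  | Lam.Y i => Lam.Y i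
  | Lam.W i n => Lam.W i n
  | Lam.M c n => Lam.M c (n + 1)

/-- second shift -/
def psi2 : Lam J → Lam J
  | Lam.Y i => Lam.W i 0
  | Lam.W i n => Lam.W i (n + 1)
  | Lam.M c n => Lam.M c (n + 1)

theorem psi1_inj : Function.Injective (psi1 : Lam J → Lam J) := by
  rintro (i | ⟨i, n⟩ | ⟨c, n⟩) (i' | ⟨i', n'⟩ | ⟨c', n'⟩) h <;> simp_all [psi1]

theorem psi2_inj : Function.Injective (psi2 : Lam J → Lam J) := by
  rintro (i | ⟨i, n⟩ | ⟨c, n⟩) (i' | ⟨i', n'⟩ | ⟨c', n'⟩) h <;> simp_all [psi2]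

theorem lab_psi1 (l : Lam J) : lab a b (psi1 l) = lab a b l := by
  rcases l with i | ⟨i, n⟩ | ⟨c, n⟩ <;> rfl

theorem emb1 {Q : Type u} (le1 le2 : Q → Q → Prop) (e : Q → J)
    (t1 : ∀ a b c, le1 a b → le1 b c → le1 a c)
    (t2 : ∀ a b c, le2 a b → le2 b c → le2 a c) (h12 : ∀ q q', le1 q q' → le2 q q')
    (q q' : Q) (h : le1 q q') :
    HomeoToClopenSubset (DD a b (AA le1 le2 e q)) (DD a b (AA le1 le2 e q')) := by
  have hh := gsh_hom (a := a) (b := b) psi1 (fun l u w h => by rw [lab_psi1]; exact h)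
  have hemb : IsEmbedding (NS.sh (gsh psi1) : NS (tgJ J) → NS (tgJ J)) :=
    NS.sh_embedding _ (gsh_inj _ psi1_inj) (gsh_tg _ (fun c n => rfl) (by
      rintro (i | ⟨i, n⟩ | ⟨c, n⟩) hl c' n' hh
      · cases hh
      · cases hh
      · exact hl _ _ rfl))
  have hE := Pt.isEmbedding_map _ hh hemb
  have hcl := Pt.isClosed_range_map _ hh (NS.sh_range_closed _)
  have hop := Pt.isOpen_range_map (r := ra a b) ra_symm _ hh (NS.sh_range_open _ 1 (by
      rintro ⟨l, u⟩ j n hi hn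
      obtain ⟨c, s, rfl, rfl, -⟩ := tgJ_some hi
      refine ⟨(Lam.M c (n - 1), Sum.inl (⊤, 2 * s + 1)), ?_⟩
      simp only [gsh, psi1]
      rw [Nat.sub_add_cancel hn])) (by
      rintro (⟨l, u⟩ | j) (⟨l', u'⟩ | j') h
      · obtain ⟨h1, h2⟩ := h
        simp only [gsh] at h1 h2
        subst h1
        rw [lab_psi1] at h2
        exact ⟨NS.is (l, u'), rfl, rfl, h2⟩
      all_goals exact h.elim)
  have hD := DD_clopen (a := a) (b := b) (AA_M le1 le2 e q)
  refine homeoClopen hE (D := DD a b (AA le1 le2 e q)) (DD_maps psi1 ?_ hh)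
    ⟨(IsClosedEmbedding.isClosedMap ⟨hE, hcl⟩) _ hD.1, (IsOpenEmbedding.isOpenMap ⟨hE, hop⟩) _ hD.2⟩
  rintro (i | ⟨i, n⟩ | ⟨c, n⟩) hl
  · obtain ⟨p, hp, hpq⟩ := hl
    exact ⟨p, hp, t1 _ _ _ hpq h⟩
  · obtain ⟨p, hp, hpq⟩ := hl
    exact ⟨p, hp, t2 _ _ _ hpq (h12 _ _ h)⟩
  · exact AA_M _ _ _ _ _ _ (by omega)

theorem emb2 {Q : Type u} (le1 le2 : Q → Q → Prop) (e : Q → J)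
    (t2 : ∀ a b c, le2 a b → le2 b c → le2 a c) (h12 : ∀ q q', le1 q q' → le2 q q')
    (q q' : Q) (h : le2 q q') :
    HomeoToClosedSubset (DD a b (AA le1 le2 e q)) (DD a b (AA le1 le2 e q')) := by
  have hh := gsh_hom (a := a) (b := b) psi2 (by
    rintro (i | ⟨i, n⟩ | ⟨c, n⟩) u w h
    · exact GA_mono _ _ _ h _
    · exact h
    · exact h)
  have hemb : IsEmbedding (NS.sh (gsh psi2) : NS (tgJ J) → NS (tgJ J)) :=
    NS.sh_embedding _ (gsh_inj _ psi2_inj) (gsh_tg _ (fun c n => rfl) (by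
      rintro (i | ⟨i, n⟩ | ⟨c, n⟩) hl c' n' hh
      · cases hh
      · cases hh
      · exact hl _ _ rfl))
  have hE := Pt.isEmbedding_map _ hh hemb
  have hcl := Pt.isClosed_range_map _ hh (NS.sh_range_closed _)
  have hD := DD_clopen (a := a) (b := b) (AA_M le1 le2 e q)
  refine homeoClosed hE (D := DD a b (AA le1 le2 e q)) (DD_maps psi2 ?_ hh)
    ((IsClosedEmbedding.isClosedMap ⟨hE, hcl⟩) _ hD.1)
  rintro (i | ⟨i, n⟩ | ⟨c, n⟩) hl
  · obtain ⟨p, hp, hpq⟩ := hl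
    exact ⟨p, hp, t2 _ _ _ (h12 _ _ hpq) h⟩
  · obtain ⟨p, hp, hpq⟩ := hl
    exact ⟨p, hp, t2 _ _ _ hpq h⟩
  · exact AA_M _ _ _ _ _ _ (by omega)

theorem conv2 [WellFoundedLT J] [Nontrivial J] (ha : Function.Injective a)
    (hab : ∀ i j, a i ≠ b j) {Q : Type u} (le1 le2 : Q → Q → Prop) (e : Q → J)
    (he : Function.Injective e) (r1 : ∀ q, le1 q q) (h12 : ∀ q q', le1 q q' → le2 q q')
    (q q' : Q) (h : ExistsInjCont (DD a b (AA le1 le2 e q)) (DD a b (AA le1 le2 e q'))) : le2 q q' := by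
  obtain ⟨f, hf, hi⟩ := h
  obtain ⟨l', h1, -, h3⟩ := key_lemma (DD_clopen (AA_M le1 le2 e q)) (fun x => (f x).1)
    (continuous_subtype_val.comp hf) (Subtype.val_injective.comp hi)
    (show VV a b (Lam.Y (e q)) (Sum.inr 0) ∈ DD a b (AA le1 le2 e q) from ⟨q, rfl, r1 q⟩)
  obtain ⟨hx, hx'⟩ := h3 (⊤, 0)
  have hmem : VV a b l' (Sum.inl (⊤, 0)) ∈ DD a b (AA le1 le2 e q') := by
    rw [← hx']; exact (f _).2
  rcases l' with i | ⟨i, n⟩ | ⟨c, n⟩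
  · obtain ⟨p, hp, hpq⟩ : ∃ p, e p = i ∧ le1 p q' := hmem
    have : e q = i := ha h1
    have : p = q := he (hp.trans this.symm)
    rw [← this]
    exact h12 _ _ hpq
  · obtain ⟨p, hp, hpq⟩ : ∃ p, e p = i ∧ le2 p q' := hmem
    have : e q = i := ha h1
    have : p = q := he (hp.trans this.symm)
    rw [← this]
    exact hpq
  · exact (hab _ _ h1).elim

theorem conv1 [WellFoundedLT J] [Nontrivial J] (ha : Function.Injective a)
    (hab : ∀ i j, a i ≠ b j) {Q : Type u} (le1 le2 : Q → Q → Prop) (e : Q → J)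
    (he : Function.Injective e) (r1 : ∀ q, le1 q q)
    (q q' : Q) (h : HomeoToClopenSubset (DD a b (AA le1 le2 e q)) (DD a b (AA le1 le2 e q'))) :
    le1 q q' := by
  obtain ⟨t, ht, ⟨f⟩⟩ := h
  have hD := DD_clopen (a := a) (b := b) (AA_M le1 le2 e q)
  have hD' := DD_clopen (a := a) (b := b) (AA_M le1 le2 e q')
  have hT : IsClopen (Subtype.val '' t : Set (XX a b)) :=
    ⟨hD'.1.isClosedEmbedding_subtypeVal.isClosedMap _ ht.1, hD'.2.isOpenMap_subtype_val _ ht.2⟩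
  obtain ⟨l', h1, h3⟩ := homeo_lab hD hT (f.trans (IsEmbedding.subtypeVal.homeomorphImage t))
    (show VV a b (Lam.Y (e q)) (Sum.inr 0) ∈ DD a b (AA le1 le2 e q) from ⟨q, rfl, r1 q⟩)
  obtain ⟨hx, hx'⟩ := h3 (⊤, 0)
  have hmem : VV a b l' (Sum.inl (⊤, 0)) ∈ DD a b (AA le1 le2 e q') := by
    rw [← hx']
    obtain ⟨y, hy, hy'⟩ := ((f.trans (IsEmbedding.subtypeVal.homeomorphImage t)) ⟨_, hx⟩).2
    rw [← hy']
    exact y.2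
  rcases l' with i | ⟨i, n⟩ | ⟨c, n⟩
  · obtain ⟨p, hp, hpq⟩ : ∃ p, e p = i ∧ le1 p q' := hmem
    have : e q = i := ha (congrArg Prod.fst h1)
    have : p = q := he (hp.trans this.symm)
    rw [← this]
    exact hpq
  · have := congrArg Prod.snd h1
    cases this
  · exact (hab _ _ (congrArg Prod.fst h1)).elim

theorem represents [WellFoundedLT J] [Nontrivial J] (ha : Function.Injective a)
    (hb : Function.Injective b) (hab : ∀ i j, a i ≠ b j) : RepresentsPairs #J (XX a b) := by
  intro Q le1 le2 hQ r1 t1 r2 t2 h12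
  obtain ⟨e⟩ := Cardinal.le_def _ _ |>.1 hQ
  refine ⟨fun q => DD a b (AA le1 le2 e q), fun q => DD_clopen (AA_M le1 le2 e q),
    fun q q' hne => nonhomeo hb hab le1 le2 e e.injective q q' hne,
    fun q q' => ⟨emb1 le1 le2 e t1 t2 h12 q q', conv1 ha hab le1 le2 e e.injective r1 q q'⟩,
    fun q q' => emb2 le1 le2 e t2 h12 q q', fun q q' hn h =>
      hn (conv2 ha hab le1 le2 e e.injective r1 h12 q q' h)⟩

theorem XX_metr : TopologicalSpace.MetrizableSpace (XX a b) :=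
  Pt.metrizable NS.emb NS.emb_inducing NS.emb_norm

theorem XX_card (hJ : Cardinal.continuum ≤ #J) : #(XX a b) = #J := by
  have hinf : ℵ₀ ≤ #J := Cardinal.aleph0_le_continuum.trans hJ
  have hJi : Infinite J := Cardinal.infinite_iff.2 hinf
  have hmulN : ∀ c : Cardinal.{u}, c ≤ #J → #J * c ≤ #J := fun c hc =>
    (Cardinal.mul_le_max_of_aleph0_le_left hinf).trans (max_le le_rfl hc)
  have hLam : #(Lam J) ≤ #J := by
    let g : Lam J → J ⊕ ((J × ℕ) ⊕ (J × ℕ)) := fun l => match l with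
      | Lam.Y i => Sum.inl i
      | Lam.W i n => Sum.inr (Sum.inl (i, n))
      | Lam.M i n => Sum.inr (Sum.inr (i, n))
    have hg : Function.Injective g := by
      rintro (i | ⟨i, n⟩ | ⟨c, n⟩) (i' | ⟨i', n'⟩ | ⟨c', n'⟩) h <;> simp_all [g]
    refine (Cardinal.mk_le_of_injective hg).trans ?_
    simp only [Cardinal.mk_sum, Cardinal.mk_prod, Cardinal.lift_id, Cardinal.mk_nat,
      Cardinal.lift_uzero, Cardinal.lift_aleph0]
    have h1 := hmulN _ hinf
    exact Cardinal.add_le_of_le hinf le_rfl (Cardinal.add_le_of_le hinf h1 h1)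
  have hGV : #(GV J) ≤ #J := by
    simp only [Cardinal.mk_sum, Cardinal.mk_prod, Cardinal.lift_id, Cardinal.mk_nat,
      Cardinal.lift_uzero, Cardinal.lift_aleph0]
    refine Cardinal.add_le_of_le hinf (hmulN _ hinf) ?_
    refine le_trans ?_ hinf
    exact (Cardinal.lt_aleph0_of_finite _).le.trans_eq' rfl |>.trans (by simp)
  have hNS : #(NS (tgJ J)) ≤ #J := by
    let g : NS (tgJ J) → (Lam J × GV J) ⊕ ℤ := fun l => match l with
      | NS.is i => Sum.inl i
      | NS.q j => Sum.inr j
    have hg : Function.Injective g := by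
      rintro (i | j) (i' | j') h <;> simp_all [g]
    refine (Cardinal.mk_le_of_injective hg).trans ?_
    simp only [Cardinal.mk_sum (Lam J × GV J), Cardinal.mk_prod (Lam J) (GV J), Cardinal.lift_id]
    refine Cardinal.add_le_of_le hinf ?_ ?_
    · rw [Cardinal.lift_uzero]; exact (mul_le_mul' hLam hGV).trans (hmulN _ le_rfl)
    · simpa using hinf
  apply le_antisymm
  · let g : XX a b → NS (tgJ J) ⊕ (NS (tgJ J) × NS (tgJ J) × ℕ × ℝ) := fun l => match l with
      | Pt.vx n => Sum.inl n
      | Pt.pt u w k t _ _ => Sum.inr (u, w, k, t)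
    have hg : Function.Injective g := by
      rintro (n | ⟨u, w, k, t, h, ht⟩) (n' | ⟨u', w', k', t', h', ht'⟩) h <;> simp_all [g]
    refine (Cardinal.mk_le_of_injective hg).trans ?_
    simp only [Cardinal.mk_sum, Cardinal.mk_prod, Cardinal.lift_id, Cardinal.mk_nat,
      Cardinal.lift_uzero, Cardinal.lift_aleph0, Cardinal.mk_real, Cardinal.lift_mul,
      Cardinal.lift_continuum]
    refine Cardinal.add_le_of_le hinf hNS ?_
    refine (mul_le_mul' hNS (mul_le_mul' hNS (le_refl _))).trans ?_
    refine hmulN _ (hmulN _ ?_)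
    rw [Cardinal.aleph0_mul_continuum]
    exact hJ
  · refine Cardinal.mk_le_of_injective (f := fun j : J => VV a b (Lam.Y j) (Sum.inr 0)) ?_
    intro j j' h
    have := (VV_inj h).1
    simpa using this

theorem final_aux (hJ : Cardinal.continuum ≤ #J) [WellFoundedLT J] :
    ∃ (X : Type u) (tX : TopologicalSpace X),
      @TopologicalSpace.MetrizableSpace X tX ∧ #X = #J ∧ @RepresentsPairs #J X tX := by
  have hinf : ℵ₀ ≤ #J := Cardinal.aleph0_le_continuum.trans hJ
  have hJi : Infinite J := Cardinal.infinite_iff.2 hinf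
  have hsum : #(J ⊕ J) ≤ #J := by
    simp only [Cardinal.mk_sum, Cardinal.lift_id]
    exact Cardinal.add_le_of_le hinf le_rfl le_rfl
  obtain ⟨g⟩ := Cardinal.le_def _ _ |>.1 hsum
  let a : J → J := fun j => g (Sum.inl j)
  let b : J → J := fun j => g (Sum.inr j)
  have ha : Function.Injective a := g.injective.comp Sum.inl_injective
  have hb : Function.Injective b := g.injective.comp Sum.inr_injective
  have hab : ∀ i j, a i ≠ b j := by
    intro i j h
    have := g.injective h
    cases this
  exact ⟨XX a b, inferInstance, XX_metr, XX_card hJ, represents ha hb hab⟩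

end Final

theorem statement0 (α : Cardinal.{u}) (hα : Cardinal.continuum ≤ α) :
    ∃ (X : Type u) (tX : TopologicalSpace X),
      @TopologicalSpace.MetrizableSpace X tX ∧ #X = α ∧
      @RepresentsPairs α X tX := by
  have hJ : #(WithTop α.ord.ToType) = α := by
    have hinf : ℵ₀ ≤ α := Cardinal.aleph0_le_continuum.trans hα
    have : #(WithTop α.ord.ToType) = #(Option α.ord.ToType) := rfl
    rw [this, Cardinal.mk_option, Cardinal.mk_ord_toType]
    exact Cardinal.add_one_eq hinf
  have h := final_aux (J := WithTop α.ord.ToType) (by rw [hJ]; exact hα)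
  rw [hJ] at h
  exact h
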